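/- arXiv:2005.12023 — 4 statements merged into one kernel-verified Lean document; each statement's English description precedes it below -/
import Mathlib

section
/- Every finite subgroup of the rotation group SO(3) is isomorphic, as an abstract group, to one of the following: a cyclic group of order n for some n ≥ 1, a dihedral group of order 2n for some n ≥ 2, the alternating group A₄ (the tetrahedral group), the symmetric group S₄ (the octahedral group), or the alternating group A₅ (the icosahedral group). -/
open Matrix

/-! A rotation other than the identity fixes exactly two points of the unit sphere, its poles. Let
a rotation group of order `N > 1` act on the set `X` of poles of its nontrivial elements. Each point
stabilizer is nontrivial, and it is cyclic because it acts faithfully by rotations on a plane. With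
`r` orbits, Burnside's formula reads `|X| + 2 * (N - 1) = r * N`, and each orbit has at most `N / 2`
points, which leaves two cases.

If some orbit has at most two points, its stabilizer is cyclic of index `1` or `2`. For index `2`,
an element exchanging the two points is an involution, because its square fixes both of them, but
neither of them is a pole of the element itself. So the group is cyclic or dihedral.

Otherwise `r = 3` and `N` is `12`, `24` or `60`. A normal subgroup of prime order would give an
orbit of at most two poles, so there is none, and the action on the four Sylow 3-subgroups is
faithful when `N` is `12` or `24`. When `N = 60`, all orbits have at least `12` points, so
centralizers of nontrivial elements have order at most `10`. Hence distinct Sylow 2-subgroups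
intersect trivially, there are five of them, and every nontrivial normal subgroup is too large to
act trivially on these five. -/

section Dihedral

variable {G : Type*} [Group G]

/-- The homomorphism out of the dihedral group of order `2 * n` that is `φ` on rotations and
sends the reflection `sr 0` to `t`. -/
def dihedralLift {n : ℕ} (φ : Multiplicative (ZMod n) →* G) (t : G) (ht : t * t = 1)
    (hφ : ∀ x, φ x * t = t * (φ x)⁻¹) : DihedralGroup n →* G where
  toFun
    | .r i => φ (.ofAdd i)
    | .sr i => t * φ (.ofAdd i)
  map_one' := φ.map_one
  map_mul' := by
    rintro (i | i) (j | j)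
    · exact φ.map_mul _ _
    · change t * φ (.ofAdd (j - i)) = φ (.ofAdd i) * (t * φ (.ofAdd j))
      rw [← mul_assoc, hφ, mul_assoc, ← map_inv, ← map_mul, sub_eq_neg_add]
      rfl
    · change t * φ (.ofAdd (i + j)) = t * φ (.ofAdd i) * φ (.ofAdd j)
      rw [mul_assoc, ← map_mul]
      rfl
    · change φ (.ofAdd (j - i)) = t * φ (.ofAdd i) * (t * φ (.ofAdd j))
      rw [mul_assoc, ← mul_assoc (φ _), hφ, mul_assoc, ← mul_assoc, ht, one_mul, ← map_inv,
        ← map_mul, sub_eq_neg_add]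
      rfl

variable {C : Subgroup G}

lemma mul_eq_mul_inv_of_mul_self_eq_one {x t : G} (hC : ∀ g ∉ C, g * g = 1)
    (hx : x ∈ C) (ht : t ∉ C) : x * t = t * x⁻¹ := by
  have hxt : x * t ∉ C := by rwa [C.mul_mem_cancel_left hx]
  calc x * t = (x * t)⁻¹ := (inv_eq_of_mul_eq_one_left (hC _ hxt)).symm
    _ = t * x⁻¹ := by rw [_root_.mul_inv_rev, inv_eq_of_mul_eq_one_left (hC t ht)]

theorem nonempty_mulEquiv_dihedralGroup_of_index_eq_two [IsCyclic C] (hindex : C.index = 2)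
    (hC : ∀ g ∉ C, g * g = 1) : Nonempty (G ≃* DihedralGroup (Nat.card C)) := by
  obtain ⟨t, ht⟩ : ∃ t, t ∉ C := by
    by_contra! h
    simp [(Subgroup.eq_top_iff' C).2 h] at hindex
  let φ : Multiplicative (ZMod (Nat.card C)) ≃* C := zmodCyclicMulEquiv inferInstance
  let F := dihedralLift (C.subtype.comp φ.toMonoidHom) t (hC t ht) fun x =>
    mul_eq_mul_inv_of_mul_self_eq_one hC (φ x).2 ht
  have hF_inj : Function.Injective F := by
    refine (injective_iff_map_eq_one F).2 ?_
    rintro (i | i) hi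
    · exact congrArg DihedralGroup.r (φ.map_eq_one_iff.1 (Subtype.ext hi))
    · exact absurd ((C.mul_mem_cancel_right (φ _).2).1 (hi.symm ▸ C.one_mem)) ht
  have hF_surj : Function.Surjective F := by
    intro g
    by_cases hg : g ∈ C
    · exact ⟨.r (φ.symm ⟨g, hg⟩).toAdd, congrArg Subtype.val (φ.apply_symm_apply ⟨g, hg⟩)⟩
    · have htg : t * g ∈ C :=
        (Subgroup.mul_mem_iff_of_index_two hindex).2 (iff_of_false ht hg)
      refine ⟨.sr (φ.symm ⟨t * g, htg⟩).toAdd, ?_⟩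
      change t * (φ (φ.symm ⟨t * g, htg⟩) : G) = g
      rw [φ.apply_symm_apply, ← mul_assoc, hC t ht, one_mul]
  exact ⟨(MulEquiv.ofBijective F ⟨hF_inj, hF_surj⟩).symm⟩

end Dihedral

section Counting

open MulAction

variable {G X : Type*} [Group G] [MulAction G X]

lemma card_eq_sum_ncard_orbit [Finite X] [Fintype (orbitRel.Quotient G X)] :
    Nat.card X = ∑ ω : orbitRel.Quotient G X, ω.orbit.ncard := by
  rw [Nat.card_congr (selfEquivSigmaOrbits' G X), Nat.card_sigma]
  rfl

lemma ncard_orbit_mul_card_stabilizer (x : X) :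
    (orbit G x).ncard * Nat.card (stabilizer G x) = Nat.card G := by
  rw [← index_stabilizer, Subgroup.index_mul_card]

variable [Finite G]

lemma two_mul_ncard_orbit_le {x : X} (hx : stabilizer G x ≠ ⊥) :
    2 * (orbit G x).ncard ≤ Nat.card G := by
  have : 1 < Nat.card (stabilizer G x) := Subgroup.one_lt_card_iff_ne_bot _ |>.2 hx
  nlinarith [ncard_orbit_mul_card_stabilizer (G := G) x]

theorem card_add_mul_card_eq_of_ncard_fixedBy [Finite X] {m : ℕ}
    (hm : ∀ g : G, g ≠ 1 → (fixedBy X g).ncard = m) :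
    Nat.card X + m * Nat.card G = Nat.card (orbitRel.Quotient G X) * Nat.card G + m := by
  classical
  have := Fintype.ofFinite G
  have := Fintype.ofFinite X
  have := Fintype.ofFinite (orbitRel.Quotient G X)
  have hburnside : ∑ g : G, (fixedBy X g).ncard =
      Nat.card (orbitRel.Quotient G X) * Nat.card G := by
    simp only [Nat.card_eq_fintype_card, ← Nat.card_coe_set_eq]
    exact sum_card_fixedBy_eq_card_orbits_mul_card_group G X
  rw [← Finset.add_sum_erase _ _ (Finset.mem_univ 1),
    Finset.sum_congr rfl fun g hg => hm g (Finset.ne_of_mem_erase hg), Finset.sum_const,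
    Finset.card_erase_of_mem (Finset.mem_univ _), Finset.card_univ, smul_eq_mul,
    fixedBy_one_eq_univ, Set.ncard_univ, ← Nat.card_eq_fintype_card (α := G)] at hburnside
  obtain ⟨n, hn⟩ := Nat.exists_eq_add_one.2 (Nat.card_pos (α := G))
  rw [← hburnside, hn, Nat.add_sub_cancel]
  ring

end Counting

section Sylow

open MulAction

variable {G : Type*} [Group G] {p : ℕ}

lemma ker_toPermHom_sylow_lt_stabilizer [Nontrivial (Sylow p G)] (P : Sylow p G) :
    (toPermHom G (Sylow p G)).ker < stabilizer G P := by
  refine lt_of_le_of_ne (fun g hg => Equiv.congr_fun (MonoidHom.mem_ker.1 hg) P) fun heq => ?_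
  obtain ⟨Q, hQ⟩ := exists_ne P
  have hPQ : (P : Subgroup G) ≤ Q := by
    refine P.2.sylow_mem_fixedPoints_iff.1 fun g => ?_
    have hg : (g : G) ∈ (toPermHom G (Sylow p G)).ker :=
      heq ▸ Sylow.smul_eq_iff_mem_normalizer.2 (Subgroup.le_normalizer g.2)
    exact Equiv.congr_fun (MonoidHom.mem_ker.1 hg) Q
  exact hQ (Sylow.ext (P.3 Q.2 hPQ))

variable [Finite G]

lemma card_sylow_modEq_one_of_disjoint (P : Sylow p G)
    (hP : ∀ Q : Sylow p G, Q ≠ P → Disjoint (P : Subgroup G) Q) :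
    Nat.card (Sylow p G) ≡ 1 [MOD Nat.card P] := by
  have hfix (g : P) (hg : g ≠ 1) : (fixedBy (Sylow p G) g).ncard = 1 := by
    refine Set.ncard_eq_one.2 ⟨P, Set.eq_singleton_iff_unique_mem.2 ⟨?_, fun Q hQ => ?_⟩⟩
    · exact (Sylow.smul_eq_iff_mem_normalizer (g := (g : G))).2 (Subgroup.le_normalizer g.2)
    · by_contra hne
      have hgQ : (g : G) ∈ (P : Subgroup G) ⊓ Q := by
        rw [← P.2.inf_normalizer_sylow Q]
        exact ⟨g.2, Sylow.smul_eq_iff_mem_normalizer.1 hQ⟩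
      exact hg (Subtype.ext (Subgroup.disjoint_def.1 (hP Q hne) hgQ.1 hgQ.2))
  have hcount := card_add_mul_card_eq_of_ncard_fixedBy hfix
  calc Nat.card (Sylow p G)
    _ ≡ Nat.card (Sylow p G) + 1 * Nat.card P [MOD Nat.card P] := by simp [Nat.ModEq]
    _ = Nat.card (orbitRel.Quotient P (Sylow p G)) * Nat.card P + 1 := hcount
    _ ≡ 1 [MOD Nat.card P] := by simp [Nat.ModEq]

variable [Fact p.Prime]

lemma card_sylow_eq_pow {n m : ℕ} (hG : Nat.card G = p ^ n * m) (hm : ¬ p ∣ m) (P : Sylow p G) :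
    Nat.card P = p ^ n := by
  have hm0 : m ≠ 0 := fun h => hm (h ▸ dvd_zero p)
  rw [P.card_eq_multiplicity, hG,
    Nat.factorization_mul (pow_ne_zero n (Fact.out : p.Prime).ne_zero) hm0]
  simp [Nat.Prime.factorization_pow Fact.out, Nat.factorization_eq_zero_of_not_dvd hm]

lemma card_stabilizer_sylow_mul_card_sylow (P : Sylow p G) :
    Nat.card (stabilizer G P) * Nat.card (Sylow p G) = Nat.card G := by
  rw [← index_stabilizer_of_transitive G P, Subgroup.card_mul_index]

lemma card_ker_toPermHom_sylow_dvd_and_lt [Nontrivial (Sylow p G)] {s : ℕ}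
    (hs : s * Nat.card (Sylow p G) = Nat.card G) :
    Nat.card (toPermHom G (Sylow p G)).ker ∣ s ∧ Nat.card (toPermHom G (Sylow p G)).ker < s := by
  obtain ⟨P⟩ : Nonempty (Sylow p G) := inferInstance
  have hlt := ker_toPermHom_sylow_lt_stabilizer P
  obtain rfl : Nat.card (stabilizer G P) = s :=
    Nat.eq_of_mul_eq_mul_right Nat.card_pos
      ((card_stabilizer_sylow_mul_card_sylow P).trans hs.symm)
  refine ⟨Subgroup.card_dvd_of_le hlt.le, ?_⟩
  exact Set.ncard_lt_ncard (s := ((toPermHom G (Sylow p G)).ker : Set G)) hlt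

end Sylow

section SmallOrder

open MulAction

variable {G : Type*} [Group G]

lemma nonempty_mulEquiv_perm_of_injective {X : Type*} [Finite X]
    {f : G →* Equiv.Perm X} (hf : Function.Injective f)
    (hG : Nat.card G = (Nat.card X).factorial) :
    Nonempty (G ≃* Equiv.Perm (Fin (Nat.card X))) := by
  have hbij : Function.Bijective f :=
    (Nat.bijective_iff_injective_and_card f).2 ⟨hf, by rw [hG, Nat.card_perm]⟩
  exact ⟨(MulEquiv.ofBijective f hbij).trans (Finite.equivFin X).permCongrHom⟩

variable [Finite G]

lemma nonempty_mulEquiv_alternatingGroup_of_injective {X : Type*} [Finite X] [Nontrivial X]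
    {f : G →* Equiv.Perm X} (hf : Function.Injective f)
    (hG : 2 * Nat.card G = (Nat.card X).factorial) :
    Nonempty (G ≃* alternatingGroup (Fin (Nat.card X))) := by
  let e : X ≃ Fin (Nat.card X) := Finite.equivFin X
  let f' : G →* Equiv.Perm (Fin (Nat.card X)) := e.permCongrHom.toMonoidHom.comp f
  have hf' : Function.Injective f' := e.permCongrHom.injective.comp hf
  have hindex : f'.range.index = 2 := by
    have hcard := f'.range.index_mul_card
    rw [← Nat.card_congr (MonoidHom.ofInjective hf').toEquiv, Nat.card_perm, Nat.card_fin,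
      ← hG] at hcard
    exact Nat.eq_of_mul_eq_mul_right Nat.card_pos hcard
  exact ⟨(MonoidHom.ofInjective hf').trans
    (MulEquiv.subgroupCongr (Equiv.Perm.eq_alternatingGroup_of_index_eq_two hindex))⟩

lemma card_sylow_three_eq_four (hG : Nat.card G = 12 ∨ Nat.card G = 24)
    (h3 : ∀ K : Subgroup G, K.Normal → Nat.card K ≠ 3) : Nat.card (Sylow 3 G) = 4 := by
  obtain ⟨P⟩ : Nonempty (Sylow 3 G) := inferInstance
  have hP : Nat.card P = 3 := by
    rcases hG with hG | hG
    · exact card_sylow_eq_pow (n := 1) (m := 4) hG (by norm_num) P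
    · exact card_sylow_eq_pow (n := 1) (m := 8) hG (by norm_num) P
  have hne : Nat.card (Sylow 3 G) ≠ 1 := fun h => by
    have := (Nat.card_eq_one_iff_unique.1 h).1
    exact h3 P P.normal_of_subsingleton hP
  have hdvd : Nat.card (Sylow 3 G) ∣ 8 := by
    have hindex := P.card_mul_index
    rw [hP] at hindex
    refine P.card_dvd_index.trans ?_
    rcases hG with hG | hG
    · exact ⟨2, by omega⟩
    · exact ⟨1, by omega⟩
  have hmod : Nat.card (Sylow 3 G) % 3 = 1 := card_sylow_modEq_one 3 G
  have hle := Nat.le_of_dvd (by norm_num) hdvd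
  interval_cases Nat.card (Sylow 3 G) <;> omega

theorem nonempty_mulEquiv_alternatingGroup_four (hG : Nat.card G = 12)
    (h3 : ∀ K : Subgroup G, K.Normal → Nat.card K ≠ 3) :
    Nonempty (G ≃* alternatingGroup (Fin 4)) := by
  have hn := card_sylow_three_eq_four (.inl hG) h3
  have : Nontrivial (Sylow 3 G) := Finite.one_lt_card_iff_nontrivial.1 (by omega)
  obtain ⟨hdvd, hlt⟩ :=
    card_ker_toPermHom_sylow_dvd_and_lt (G := G) (p := 3) (s := 3) (by rw [hn, hG])
  have hker : (toPermHom G (Sylow 3 G)).ker = ⊥ := by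
    refine Subgroup.card_eq_one.1 ?_
    exact ((Nat.dvd_prime Nat.prime_three).1 hdvd).resolve_right hlt.ne
  have := nonempty_mulEquiv_alternatingGroup_of_injective ((MonoidHom.ker_eq_bot_iff _).1 hker)
    (by rw [hG, hn]; rfl)
  rwa [hn] at this

theorem nonempty_mulEquiv_perm_four (hG : Nat.card G = 24)
    (h2 : ∀ K : Subgroup G, K.Normal → Nat.card K ≠ 2)
    (h3 : ∀ K : Subgroup G, K.Normal → Nat.card K ≠ 3) :
    Nonempty (G ≃* Equiv.Perm (Fin 4)) := by
  have hn := card_sylow_three_eq_four (.inr hG) h3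
  have : Nontrivial (Sylow 3 G) := Finite.one_lt_card_iff_nontrivial.1 (by omega)
  obtain ⟨hdvd, hlt⟩ :=
    card_ker_toPermHom_sylow_dvd_and_lt (G := G) (p := 3) (s := 6) (by rw [hn, hG])
  have hker : (toPermHom G (Sylow 3 G)).ker = ⊥ := by
    refine Subgroup.card_eq_one.1 ?_
    have hpos := Nat.card_pos (α := (toPermHom G (Sylow 3 G)).ker)
    have hne2 := h2 _ (MonoidHom.normal_ker (toPermHom G (Sylow 3 G)))
    have hne3 := h3 _ (MonoidHom.normal_ker (toPermHom G (Sylow 3 G)))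
    interval_cases Nat.card (toPermHom G (Sylow 3 G)).ker <;> omega
  have := nonempty_mulEquiv_perm_of_injective ((MonoidHom.ker_eq_bot_iff _).1 hker)
    (by rw [hG, hn]; rfl)
  rwa [hn] at this

end SmallOrder

section OrderSixty

open MulAction

variable {G : Type*} [Group G] [Finite G]

-- The conjugacy class of `g` has `|G| / |C(g)|` elements and lies in `K \ {1}`.
lemma card_lt_card_mul_card_centralizer {K : Subgroup G} [K.Normal] {g : G} (hgK : g ∈ K)
    (hg : g ≠ 1) :
    Nat.card G < Nat.card K * Nat.card (Subgroup.centralizer {g}) := by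
  have horbit : orbit (ConjAct G) g ⊂ (K : Set G) := by
    refine ⟨?_, fun h => ?_⟩
    · rintro _ ⟨x, rfl⟩
      exact Subgroup.Normal.conj_mem ‹_› g hgK _
    · obtain ⟨x, hx⟩ := h K.one_mem
      exact hg ((smul_eq_iff_eq_inv_smul x).1 hx |>.trans (smul_one _))
  have hlt : (orbit (ConjAct G) g).ncard < Nat.card K := Set.ncard_lt_ncard horbit
  calc Nat.card G = (orbit (ConjAct G) g).ncard * Nat.card (stabilizer (ConjAct G) g) := by
        exact (ncard_orbit_mul_card_stabilizer (G := ConjAct G) g).symm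
    _ = (orbit (ConjAct G) g).ncard * Nat.card (Subgroup.centralizer {g}) := by
        rw [Subgroup.nat_card_centralizer_nat_card_stabilizer]
    _ < Nat.card K * Nat.card (Subgroup.centralizer {g}) :=
        Nat.mul_lt_mul_of_pos_right hlt Nat.card_pos

section SmallCentralizers

variable (hG : Nat.card G = 60)
  (hC : ∀ g : G, g ≠ 1 → Nat.card (Subgroup.centralizer {g}) ≤ 10)

include hG hC

lemma six_lt_card_of_normal {K : Subgroup G} [K.Normal] (hK : K ≠ ⊥) : 6 < Nat.card K := by
  obtain ⟨g, hgK, hg⟩ := K.bot_or_exists_ne_one.resolve_left hK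
  have hlt := card_lt_card_mul_card_centralizer hgK hg
  nlinarith [hC g hg]

lemma centralizer_eq_sylow_two (P : Sylow 2 G) {t : G} (htP : t ∈ P) (ht : t ≠ 1) :
    Subgroup.centralizer {t} = P := by
  have hP : Nat.card P = 2 ^ 2 := card_sylow_eq_pow (m := 15) hG (by norm_num) P
  have := IsPGroup.isMulCommutative_of_card_eq_prime_sq hP
  have hle : (P : Subgroup G) ≤ Subgroup.centralizer {t} := fun x hx =>
    Subgroup.mem_centralizer_singleton_iff.2 (setLike_mul_comm hx htP)
  have hP_dvd : 4 ∣ Nat.card (Subgroup.centralizer {t}) :=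
    Dvd.dvd.trans (by norm_num [hP]) (Subgroup.card_dvd_of_le hle)
  have hdvd : Nat.card (Subgroup.centralizer {t}) ∣ 60 := hG ▸ Subgroup.card_subgroup_dvd_card _
  have hle10 := hC t ht
  have hpos := Nat.card_pos (α := Subgroup.centralizer {t})
  refine (Subgroup.eq_of_le_of_card_ge hle (le_of_le_of_eq ?_ hP.symm)).symm
  interval_cases Nat.card (Subgroup.centralizer {t}) <;> omega

lemma card_sylow_two_eq_five : Nat.card (Sylow 2 G) = 5 := by
  obtain ⟨P⟩ : Nonempty (Sylow 2 G) := inferInstance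
  have hP : Nat.card P = 2 ^ 2 := card_sylow_eq_pow (m := 15) hG (by norm_num) P
  have hmod : Nat.card (Sylow 2 G) ≡ 1 [MOD 2 ^ 2] := by
    refine hP ▸ card_sylow_modEq_one_of_disjoint P fun Q hQP => ?_
    refine Subgroup.disjoint_def.2 fun {t} htP htQ => by_contra fun ht => hQP (Sylow.ext ?_)
    exact (centralizer_eq_sylow_two hG hC Q htQ ht).symm.trans
      (centralizer_eq_sylow_two hG hC P htP ht)
  have hne : Nat.card (Sylow 2 G) ≠ 1 := fun h => by
    have := (Nat.card_eq_one_iff_unique.1 h).1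
    have := P.normal_of_subsingleton
    have hP_ne : (P : Subgroup G) ≠ ⊥ := fun h => by
      have := Subgroup.card_eq_one.2 h
      omega
    have := six_lt_card_of_normal hG hC hP_ne
    omega
  have hdvd : Nat.card (Sylow 2 G) ∣ 15 := by
    have hindex := P.card_mul_index
    rw [hP, hG] at hindex
    exact P.card_dvd_index.trans ⟨1, by omega⟩
  have hle := Nat.le_of_dvd (by norm_num) hdvd
  rw [Nat.ModEq] at hmod
  interval_cases Nat.card (Sylow 2 G) <;> omega

theorem nonempty_mulEquiv_alternatingGroup_five : Nonempty (G ≃* alternatingGroup (Fin 5)) := by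
  have hn := card_sylow_two_eq_five hG hC
  have : Nontrivial (Sylow 2 G) := Finite.one_lt_card_iff_nontrivial.1 (by omega)
  obtain ⟨hdvd, hlt⟩ :=
    card_ker_toPermHom_sylow_dvd_and_lt (G := G) (p := 2) (s := 12) (by rw [hn, hG])
  have hker : (toPermHom G (Sylow 2 G)).ker = ⊥ := by
    by_contra hne
    have hgt := six_lt_card_of_normal hG hC hne
    interval_cases Nat.card (toPermHom G (Sylow 2 G)).ker <;> omega
  have := nonempty_mulEquiv_alternatingGroup_of_injective ((MonoidHom.ker_eq_bot_iff _).1 hker)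
    (by rw [hG, hn]; rfl)
  rwa [hn] at this

end SmallCentralizers

end OrderSixty

section TwoFixedPoints

lemma eq_pair_of_ncard_eq_two {α : Type*} {s : Set α} (hs : s.ncard = 2) {a b : α} (ha : a ∈ s)
    (hb : b ∈ s) (hab : a ≠ b) : s = {a, b} := by
  refine (Set.eq_of_subset_of_ncard_le (Set.insert_subset ha (Set.singleton_subset_iff.2 hb)) ?_
    (Set.finite_of_ncard_ne_zero (by omega))).symm
  rw [hs, Set.ncard_pair hab]

open MulAction

variable {G X : Type*} [Group G] [MulAction G X]

variable (G X) in
/-- Every nontrivial element of `G` fixes exactly two points of `X`, as happens for a group of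
rotations acting on its set of poles. -/
def FixesTwoPoints : Prop :=
  ∀ g : G, g ≠ 1 → (fixedBy X g).ncard = 2

namespace FixesTwoPoints

lemma finite_fixedBy (h : FixesTwoPoints G X) {g : G} (hg : g ≠ 1) : (fixedBy X g).Finite :=
  Set.finite_of_ncard_ne_zero (by simp [h g hg])

lemma nonempty_fixedBy (h : FixesTwoPoints G X) {g : G} (hg : g ≠ 1) : (fixedBy X g).Nonempty :=
  Set.nonempty_of_ncard_ne_zero (by simp [h g hg])

lemma finite [Finite G] (h : FixesTwoPoints G X) (hstab : ∀ x : X, stabilizer G x ≠ ⊥) :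
    Finite X := by
  have hcover : (⋃ g ∈ {g : G | g ≠ 1}, fixedBy X g) = Set.univ := by
    refine Set.eq_univ_of_forall fun x => ?_
    obtain ⟨g, hgx, hg⟩ := (stabilizer G x).bot_or_exists_ne_one.resolve_left (hstab x)
    exact Set.mem_biUnion hg hgx
  rw [← Set.finite_univ_iff, ← hcover]
  exact (Set.toFinite {g : G | g ≠ 1}).biUnion fun g hg => h.finite_fixedBy hg

lemma exists_ncard_orbit_le_two_of_normal (h : FixesTwoPoints G X) {K : Subgroup G} [K.Normal]
    (hK : (Nat.card K).Prime) : ∃ x : X, (orbit G x).ncard ≤ 2 := by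
  have : Fact (Nat.card K).Prime := ⟨hK⟩
  have hK_ne : K ≠ ⊥ := fun h => hK.ne_one (Subgroup.card_eq_one.2 h)
  obtain ⟨g, hgK, hg⟩ := K.bot_or_exists_ne_one.resolve_left hK_ne
  obtain ⟨x, hx⟩ : (fixedBy X g).Nonempty := h.nonempty_fixedBy hg
  have hKx : K ≤ stabilizer G x := fun k hk => by
    have hmem : (⟨k, hk⟩ : K) ∈ Subgroup.zpowers (⟨g, hgK⟩ : K) :=
      mem_zpowers_of_prime_card rfl (by simpa using hg)
    obtain ⟨n, hn⟩ := hmem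
    rw [← show g ^ n = k from congrArg Subtype.val hn]
    exact Subgroup.zpow_mem _ hx n
  have horbit : orbit G x ⊆ fixedBy X g := by
    rintro _ ⟨a, rfl⟩
    have hconj : (a⁻¹ * g * a) • x = x :=
      hKx (by simpa using Subgroup.Normal.conj_mem ‹_› g hgK a⁻¹)
    rwa [mul_assoc, mul_smul, inv_smul_eq_iff, mul_smul] at hconj
  exact ⟨x, (Set.ncard_le_ncard horbit (h.finite_fixedBy hg)).trans (h g hg).le⟩

lemma card_centralizer_le [Finite G] (h : FixesTwoPoints G X) {g : G} (hg : g ≠ 1) {x : X}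
    (hgx : g • x = x) :
    Nat.card (Subgroup.centralizer {g}) ≤ 2 * Nat.card (stabilizer G x) := by
  set C := Subgroup.centralizer {g}
  have horbit : orbit C x ⊆ fixedBy X g := by
    rintro _ ⟨c, rfl⟩
    have hcomm : (c : G) * g = g * c := Subgroup.mem_centralizer_singleton_iff.1 c.2
    change g • (c : G) • x = (c : G) • x
    rw [← mul_smul, ← hcomm, mul_smul, hgx]
  have horbit_card : (orbit C x).ncard ≤ 2 :=
    (Set.ncard_le_ncard horbit (h.finite_fixedBy hg)).trans (h g hg).le
  have hstab_card : Nat.card (stabilizer C x) ≤ Nat.card (stabilizer G x) :=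
    Nat.card_le_card_of_injective (fun c => (⟨c.1, c.2⟩ : stabilizer G x)) fun c d hcd =>
      Subtype.ext (Subtype.ext (congrArg (Subtype.val : stabilizer G x → G) hcd))
  calc Nat.card C = (orbit C x).ncard * Nat.card (stabilizer C x) := 
        (ncard_orbit_mul_card_stabilizer x).symm
    _ ≤ 2 * Nat.card (stabilizer G x) := Nat.mul_le_mul horbit_card hstab_card

lemma mul_self_eq_one (h : FixesTwoPoints G X) {x : X} (hx : (orbit G x).ncard = 2) {g : G}
    (hgx : g • x ≠ x) : g * g = 1 := by
  have horbit : orbit G x = {x, g • x} :=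
    eq_pair_of_ncard_eq_two hx (mem_orbit_self x) (mem_orbit x g) hgx.symm
  have hggx : g • g • x = x := by
    have hmem : g • g • x ∈ ({x, g • x} : Set X) :=
      horbit ▸ mem_orbit_of_mem_orbit g (mem_orbit x g)
    exact hmem.resolve_right fun h => hgx (smul_left_cancel g h)
  by_contra hgg
  have hfix : fixedBy X (g * g) = {x, g • x} := by
    refine eq_pair_of_ncard_eq_two (h _ hgg) ?_ ?_ hgx.symm
    · rwa [mem_fixedBy, mul_smul]
    · rw [mem_fixedBy, mul_smul, hggx]
  have hg : g ≠ 1 := by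
    rintro rfl
    simp at hgg
  obtain ⟨y, hy⟩ : (fixedBy X g).Nonempty := h.nonempty_fixedBy hg
  have hy_mem : y ∈ ({x, g • x} : Set X) := by
    rw [← hfix, mem_fixedBy, mul_smul, hy, hy]
  rcases hy_mem with rfl | rfl
  · exact hgx hy
  · exact hgx (smul_left_cancel g hy)

end FixesTwoPoints

end TwoFixedPoints

section OrbitSizes

open MulAction

-- The largest summand exceeds `N / 3`, so it is `N / 2`; the middle one then exceeds `N / 4`, so it
-- is `N / 2` or `N / 3`.
lemma le_two_or_eq_of_sum_eq_of_le {N a b c : ℕ} (ha : a ∣ N) (hb : b ∣ N) (hc : c ∣ N)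
    (ha2 : 2 * a ≤ N) (hb2 : 2 * b ≤ N) (hc2 : 2 * c ≤ N) (hsum : a + b + c = N + 2)
    (hcb : c ≤ b) (hba : b ≤ a) :
    c ≤ 2 ∨ N = 12 ∨ N = 24 ∨ (N = 60 ∧ 12 ≤ c) := by
  obtain ⟨u, hau⟩ := ha
  obtain ⟨v, hbv⟩ := hb
  obtain ⟨w, hcw⟩ := hc
  obtain rfl : u = 2 := by nlinarith
  have hv2 : 2 ≤ v := by nlinarith
  have hv3 : v ≤ 3 := by nlinarith
  interval_cases v
  · exact .inl (by omega)
  · have hw2 : 2 ≤ w := by nlinarith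
    have hw5 : w ≤ 5 := by
      by_contra! hw6
      nlinarith
    interval_cases w <;> omega

lemma le_two_or_eq_of_sum_eq {N a b c : ℕ} (ha : a ∣ N) (hb : b ∣ N) (hc : c ∣ N)
    (ha2 : 2 * a ≤ N) (hb2 : 2 * b ≤ N) (hc2 : 2 * c ≤ N) (hsum : a + b + c = N + 2) :
    (a ≤ 2 ∨ b ≤ 2 ∨ c ≤ 2) ∨ N = 12 ∨ N = 24 ∨ (N = 60 ∧ 12 ≤ a ∧ 12 ≤ b ∧ 12 ≤ c) := by
  wlog hba : b ≤ a generalizing a b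
  · have := this hb ha hb2 ha2 (by omega) (by omega)
    tauto
  rcases le_total c b with hcb | hbc
  · have := le_two_or_eq_of_sum_eq_of_le ha hb hc ha2 hb2 hc2 hsum hcb hba
    omega
  rcases le_total c a with hca | hac
  · have := le_two_or_eq_of_sum_eq_of_le ha hc hb ha2 hc2 hb2 (by omega) hbc hca
    omega
  · have := le_two_or_eq_of_sum_eq_of_le hc ha hb hc2 ha2 hb2 (by omega) hba hac
    omega

variable {G X : Type*} [Group G] [MulAction G X] [Finite G]

namespace FixesTwoPoints

lemma card_le_two_or_card_quotient_eq_three [Finite X] (h : FixesTwoPoints G X)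
    (hstab : ∀ x : X, stabilizer G x ≠ ⊥) :
    Nat.card X ≤ 2 ∨ Nat.card (orbitRel.Quotient G X) = 3 := by
  have := Fintype.ofFinite (orbitRel.Quotient G X)
  have hburnside := card_add_mul_card_eq_of_ncard_fixedBy h
  have hX : 2 * Nat.card X ≤ Nat.card (orbitRel.Quotient G X) * Nat.card G := by
    rw [card_eq_sum_ncard_orbit (G := G), Finset.mul_sum, Nat.card_eq_fintype_card,
      ← smul_eq_mul (Fintype.card _), ← Finset.card_univ]
    refine Finset.sum_le_card_nsmul _ _ _ fun ω _ => ?_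
    induction ω using Quotient.inductionOn' with | h x
    exact two_mul_ncard_orbit_le (hstab x)
  have hG := Nat.card_pos (α := G)
  have hr : Nat.card (orbitRel.Quotient G X) < 4 := by nlinarith
  interval_cases Nat.card (orbitRel.Quotient G X) <;> omega

theorem exists_ncard_orbit_le_two_or_card_eq [Nontrivial G] (h : FixesTwoPoints G X)
    (hstab : ∀ x : X, stabilizer G x ≠ ⊥) :
    (∃ x : X, (orbit G x).ncard ≤ 2) ∨ Nat.card G = 12 ∨ Nat.card G = 24 ∨
      (Nat.card G = 60 ∧ ∀ x : X, 12 ≤ (orbit G x).ncard) := by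
  have := h.finite hstab
  have := Fintype.ofFinite (orbitRel.Quotient G X)
  rcases h.card_le_two_or_card_quotient_eq_three hstab with hX | hr
  · obtain ⟨g, hg⟩ := exists_ne (1 : G)
    obtain ⟨x, -⟩ := h.nonempty_fixedBy hg
    exact .inl ⟨x, (Set.ncard_le_card _).trans hX⟩
  let e : Fin 3 ≃ orbitRel.Quotient G X := (Finite.equivFinOfCardEq hr).symm
  have hsum : (e 0).orbit.ncard + (e 1).orbit.ncard + (e 2).orbit.ncard = Nat.card G + 2 := by
    have hburnside := card_add_mul_card_eq_of_ncard_fixedBy h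
    rw [hr, card_eq_sum_ncard_orbit (G := G), ← e.sum_comp, Fin.sum_univ_three] at hburnside
    omega
  have hexists (ω : orbitRel.Quotient G X) : ∃ x : X, ω.orbit = orbit G x :=
    Quotient.inductionOn' ω fun x => ⟨x, rfl⟩
  have hdvd (ω : orbitRel.Quotient G X) : ω.orbit.ncard ∣ Nat.card G := by
    obtain ⟨x, hx⟩ := hexists ω
    exact hx ▸ Dvd.intro _ (ncard_orbit_mul_card_stabilizer x)
  have hle (ω : orbitRel.Quotient G X) : 2 * ω.orbit.ncard ≤ Nat.card G := by
    obtain ⟨x, hx⟩ := hexists ω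
    exact hx ▸ two_mul_ncard_orbit_le (hstab x)
  rcases le_two_or_eq_of_sum_eq (hdvd _) (hdvd _) (hdvd _) (hle _) (hle _) (hle _) hsum with
    hsmall | h12 | h24 | ⟨h60, h0, h1, h2⟩
  · left
    obtain ⟨ω, hω⟩ : ∃ ω : orbitRel.Quotient G X, ω.orbit.ncard ≤ 2 := by
      rcases hsmall with h | h | h <;> exact ⟨_, h⟩
    obtain ⟨x, hx⟩ := hexists ω
    exact ⟨x, hx ▸ hω⟩
  · exact .inr (.inl h12)
  · exact .inr (.inr (.inl h24))
  · refine .inr (.inr (.inr ⟨h60, fun x => ?_⟩))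
    obtain ⟨i, hi⟩ := e.surjective (Quotient.mk'' x)
    have hx : orbit G x = (e i).orbit := by rw [hi]; rfl
    rw [hx]
    fin_cases i <;> assumption

end FixesTwoPoints

end OrbitSizes

section Classification

open MulAction

variable {G X : Type*} [Group G] [MulAction G X]

namespace FixesTwoPoints

lemma isCyclic_or_dihedral_of_ncard_orbit_le_two [Finite G] (h : FixesTwoPoints G X) {x : X}
    [IsCyclic (stabilizer G x)] (hstab : stabilizer G x ≠ ⊥) (hx : (orbit G x).ncard ≤ 2) :
    IsCyclic G ∨ ∃ n, 2 ≤ n ∧ Nonempty (G ≃* DihedralGroup n) := by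
  have hne : (orbit G x).ncard ≠ 0 := index_stabilizer G x ▸ Subgroup.index_ne_zero_of_finite
  obtain hone | htwo : (orbit G x).ncard = 1 ∨ (orbit G x).ncard = 2 := by omega
  · left
    have htop : stabilizer G x = ⊤ := by
      rw [← Subgroup.index_eq_one, index_stabilizer, hone]
    exact isCyclic_of_surjective (stabilizer G x).subtype fun g =>
      ⟨⟨g, htop ▸ Subgroup.mem_top g⟩, rfl⟩
  · right
    refine ⟨_, (Subgroup.one_lt_card_iff_ne_bot _).2 hstab,
      nonempty_mulEquiv_dihedralGroup_of_index_eq_two ?_ fun g hg => h.mul_self_eq_one htwo hg⟩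
    rw [index_stabilizer, htwo]

lemma card_centralizer_le_ten [Finite G] (h : FixesTwoPoints G X) (hG : Nat.card G = 60)
    (horbit : ∀ x : X, 12 ≤ (orbit G x).ncard) {g : G} (hg : g ≠ 1) :
    Nat.card (Subgroup.centralizer {g}) ≤ 10 := by
  obtain ⟨x, hx⟩ := h.nonempty_fixedBy hg
  have hle := h.card_centralizer_le hg hx
  nlinarith [horbit x, ncard_orbit_mul_card_stabilizer (G := G) x]

theorem isCyclic_or_dihedral_or_polyhedral [Finite G] (h : FixesTwoPoints G X)
    (hcyc : ∀ x : X, IsCyclic (stabilizer G x)) (hstab : ∀ x : X, stabilizer G x ≠ ⊥) :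
    IsCyclic G ∨
    (∃ n : ℕ, 2 ≤ n ∧ Nonempty (G ≃* DihedralGroup n)) ∨
    Nonempty (G ≃* alternatingGroup (Fin 4)) ∨
    Nonempty (G ≃* Equiv.Perm (Fin 4)) ∨
    Nonempty (G ≃* alternatingGroup (Fin 5)) := by
  rcases subsingleton_or_nontrivial G with hG | hG
  · exact .inl isCyclic_of_subsingleton
  by_cases hsmall : ∃ x : X, (orbit G x).ncard ≤ 2
  · obtain ⟨x, hx⟩ := hsmall
    exact (h.isCyclic_or_dihedral_of_ncard_orbit_le_two (hstab x) hx).imp_right .inl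
  have hnormal {p : ℕ} (hp : p.Prime) (K : Subgroup G) (hK : K.Normal) : Nat.card K ≠ p :=
    fun hKp => hsmall (h.exists_ncard_orbit_le_two_of_normal (hKp ▸ hp))
  rcases (h.exists_ncard_orbit_le_two_or_card_eq hstab).resolve_left hsmall with
    h12 | h24 | ⟨h60, horbit⟩
  · exact .inr (.inr (.inl
      (nonempty_mulEquiv_alternatingGroup_four h12 (hnormal Nat.prime_three))))
  · exact .inr (.inr (.inr (.inl
      (nonempty_mulEquiv_perm_four h24 (hnormal Nat.prime_two) (hnormal Nat.prime_three)))))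
  · exact .inr (.inr (.inr (.inr
      (nonempty_mulEquiv_alternatingGroup_five h60 fun g =>
        h.card_centralizer_le_ten h60 horbit))))

end FixesTwoPoints

end Classification

section Rotation

variable {R : Type*} [CommRing R]

lemma transpose_mulVec_cross (A : Matrix (Fin 3) (Fin 3) R) (v w : Fin 3 → R) :
    Aᵀ *ᵥ ((A *ᵥ v) ⨯₃ (A *ᵥ w)) = A.det • (v ⨯₃ w) := by
  ext i
  fin_cases i <;>
    simp [det_fin_three, mulVec, dotProduct, Fin.sum_univ_three, cross_apply] <;> ring

lemma dotProduct_mulVec_mulVec {n : Type*} [Fintype n] [DecidableEq n] {A : Matrix n n R}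
    (hA : A ∈ orthogonalGroup n R) (v w : n → R) : (A *ᵥ v) ⬝ᵥ (A *ᵥ w) = v ⬝ᵥ w := by
  rw [dotProduct_mulVec, ← mulVec_transpose, mulVec_mulVec,
    (mem_orthogonalGroup_iff' n R).1 hA, one_mulVec]

lemma cross_mulVec_mulVec {A : Matrix (Fin 3) (Fin 3) R}
    (hA : A ∈ specialOrthogonalGroup (Fin 3) R) (v w : Fin 3 → R) :
    (A *ᵥ v) ⨯₃ (A *ᵥ w) = A *ᵥ (v ⨯₃ w) := by
  rw [← one_smul R (v ⨯₃ w), ← (mem_specialOrthogonalGroup_iff.1 hA).2,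
    ← transpose_mulVec_cross, mulVec_mulVec,
    (mem_orthogonalGroup_iff (Fin 3) R).1 hA.1, one_mulVec]

-- With `n = v ⨯₃ w`, the double cross product `n ⨯₃ (x ⨯₃ n)` equals `(n ⬝ᵥ n) • x` up to a
-- multiple of `n`, and it lies in the span of `n ⨯₃ v` and `n ⨯₃ w`, which `A` fixes.
lemma eq_one_of_mulVec_eq_self {A : specialOrthogonalGroup (Fin 3) ℝ} {v w : Fin 3 → ℝ}
    (hvw : v ⨯₃ w ≠ 0) (hv : A.1 *ᵥ v = v) (hw : A.1 *ᵥ w = w) : A = 1 := by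
  set n := v ⨯₃ w with hn
  have hAn : A.1 *ᵥ n = n := by rw [hn, ← cross_mulVec_mulVec A.2, hv, hw]
  have hdecomp (x : Fin 3 → ℝ) :
      (n ⬝ᵥ n) • x = (x ⬝ᵥ w) • (n ⨯₃ v) - (v ⬝ᵥ x) • (n ⨯₃ w) + (x ⬝ᵥ n) • n := by
    rw [← map_smul, ← map_smul, ← map_sub, ← cross_cross_eq_smul_sub_smul',
      cross_cross_eq_smul_sub_smul', sub_add_cancel]
  have hn0 : n ⬝ᵥ n ≠ 0 := fun h => hvw (dotProduct_self_eq_zero.1 h)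
  have hAx (x : Fin 3 → ℝ) : (n ⬝ᵥ n) • (A.1 *ᵥ x) = (n ⬝ᵥ n) • x := by
    rw [← mulVec_smul, hdecomp]
    simp only [mulVec_add, mulVec_sub, mulVec_smul, ← cross_mulVec_mulVec A.2, hAn, hv, hw]
  exact Subtype.ext (ext_iff_mulVec.2 fun x => by
    rw [Submonoid.coe_one, one_mulVec, smul_right_injective _ hn0 (hAx x)])

lemma exists_smul_dotProduct_self_eq_one {n : Type*} [Fintype n] {v : n → ℝ} (hv : v ≠ 0) :
    ∃ c : ℝ, (c • v) ⬝ᵥ (c • v) = 1 := by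
  have hpos : 0 < v ⬝ᵥ v :=
    lt_of_le_of_ne (Finset.sum_nonneg fun i _ => mul_self_nonneg (v i))
      fun h => hv (dotProduct_self_eq_zero.1 h.symm)
  refine ⟨(√(v ⬝ᵥ v))⁻¹, ?_⟩
  rw [smul_dotProduct, dotProduct_smul, smul_eq_mul, smul_eq_mul, ← mul_assoc, ← mul_inv,
    Real.mul_self_sqrt hpos.le, inv_mul_cancel₀ hpos.ne']

lemma exists_dotProduct_self_eq_one_mulVec_eq_self {A : Matrix (Fin 3) (Fin 3) ℝ}
    (hA : A ∈ specialOrthogonalGroup (Fin 3) ℝ) : ∃ v, v ⬝ᵥ v = 1 ∧ A *ᵥ v = v := by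
  have hdet_sub : (A - 1).det = 0 := by
    have htranspose : Aᵀ * (A - 1) = -(A - 1)ᵀ := by
      rw [mul_sub, (mem_orthogonalGroup_iff' (Fin 3) ℝ).1 hA.1, mul_one, transpose_sub,
        transpose_one, neg_sub]
    have hneg := congrArg det htranspose
    rw [det_mul, det_transpose, (mem_specialOrthogonalGroup_iff.1 hA).2, det_neg,
      det_transpose, Fintype.card_fin] at hneg
    linarith
  obtain ⟨v, hv, hAv⟩ := exists_mulVec_eq_zero_iff.2 hdet_sub
  rw [sub_mulVec, one_mulVec, sub_eq_zero] at hAv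
  obtain ⟨c, hc⟩ := exists_smul_dotProduct_self_eq_one hv
  exact ⟨c • v, hc, by rw [mulVec_smul, hAv]⟩

lemma eq_or_eq_neg_of_cross_eq_zero {v w : Fin 3 → ℝ} (hv : v ⬝ᵥ v = 1) (hw : w ⬝ᵥ w = 1)
    (h : v ⨯₃ w = 0) : w = v ∨ w = -v := by
  have hw_eq : w = (v ⬝ᵥ w) • v := by
    have := cross_cross_eq_smul_sub_smul' v v w
    rw [h, map_zero, hv, one_smul] at this
    exact (sub_eq_zero.1 this.symm).symm
  have hsq : (v ⬝ᵥ w) * (v ⬝ᵥ w) = 1 := by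
    rw [← hw]
    nth_rw 3 [hw_eq]
    rw [smul_dotProduct, smul_eq_mul]
  rcases mul_self_eq_one_iff.1 hsq with hvw | hvw <;> rw [hvw] at hw_eq
  · exact .inl (by simpa using hw_eq)
  · exact .inr (by simpa using hw_eq)

end Rotation

section Plane

/-- For orthogonal unit vectors `v` and `u`, the identification of `ℂ` with the plane orthogonal
to `v` that sends `1` to `u` and turns multiplication by `I` into `v ⨯₃ ·`. -/
def planeVec (v u : Fin 3 → ℝ) : ℂ →ₗ[ℝ] (Fin 3 → ℝ) :=
  Complex.reLm.smulRight u + Complex.imLm.smulRight (v ⨯₃ u)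

lemma planeVec_apply (v u : Fin 3 → ℝ) (z : ℂ) :
    planeVec v u z = z.re • u + z.im • (v ⨯₃ u) := rfl

variable {v u : Fin 3 → ℝ} (hv : v ⬝ᵥ v = 1) (hu : u ⬝ᵥ u = 1) (hvu : v ⬝ᵥ u = 0)

include hv hu hvu

lemma cross_dotProduct_cross_self_eq_one : (v ⨯₃ u) ⬝ᵥ (v ⨯₃ u) = 1 := by
  rw [cross_dot_cross, hv, hu, hvu]
  norm_num

lemma planeVec_injective : Function.Injective (planeVec v u) := by
  have hre (z : ℂ) : u ⬝ᵥ planeVec v u z = z.re := by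
    simp [planeVec_apply, hu]
  have him (z : ℂ) : (v ⨯₃ u) ⬝ᵥ planeVec v u z = z.im := by
    simp [planeVec_apply, dotProduct_comm _ u, cross_dotProduct_cross_self_eq_one hv hu hvu]
  intro z w h
  exact Complex.ext (by rw [← hre, h, hre]) (by rw [← him, h, him])

lemma exists_planeVec_eq {x : Fin 3 → ℝ} (hx : v ⬝ᵥ x = 0) : ∃ z, planeVec v u z = x := by
  set w := v ⨯₃ u with hw
  have hcross : w ⨯₃ (w ⨯₃ x) = -(u ⬝ᵥ x) • u := by
    rw [hw, cross_cross_eq_smul_sub_smul v u x, hx, zero_smul, zero_sub, ← neg_smul, map_smul,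
      cross_cross_eq_smul_sub_smul, hv, dotProduct_comm u v, hvu, one_smul, zero_smul, sub_zero]
  rw [cross_cross_eq_smul_sub_smul', cross_dotProduct_cross_self_eq_one hv hu hvu, one_smul,
    sub_eq_iff_eq_add, neg_smul] at hcross
  refine ⟨⟨u ⬝ᵥ x, w ⬝ᵥ x⟩, ?_⟩
  rw [planeVec_apply, hcross]
  abel

lemma exists_mulVec_planeVec_eq {A : Matrix (Fin 3) (Fin 3) ℝ}
    (hA : A ∈ specialOrthogonalGroup (Fin 3) ℝ) (hAv : A *ᵥ v = v) :
    ∃ c : ℂ, ∀ z, A *ᵥ planeVec v u z = planeVec v u (c * z) := by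
  have hAu : v ⬝ᵥ (A *ᵥ u) = 0 := by rw [← hvu, ← dotProduct_mulVec_mulVec hA.1 v u, hAv]
  obtain ⟨c, hc⟩ := exists_planeVec_eq hv hu hvu hAu
  have hcross : v ⨯₃ (A *ᵥ u) = planeVec v u (c * Complex.I) := by
    rw [← hc, planeVec_apply, map_add, map_smul, map_smul, cross_cross_eq_smul_sub_smul', hvu, hv]
    simp [planeVec_apply]
    abel
  refine ⟨c, fun z => ?_⟩
  calc A *ᵥ planeVec v u z = z.re • (A *ᵥ u) + z.im • (v ⨯₃ (A *ᵥ u)) := by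
        rw [planeVec_apply, mulVec_add, mulVec_smul, mulVec_smul, ← cross_mulVec_mulVec hA,
          hAv]
    _ = planeVec v u (z.re • c + z.im • (c * Complex.I)) := by
        rw [hcross, ← hc, ← map_smul, ← map_smul, ← map_add]
    _ = planeVec v u (c * z) := by
        congr 1
        nth_rw 3 [← Complex.re_add_im z]
        simp only [Complex.real_smul]
        ring

end Plane

section Poles

variable {G : Type*} [Group G] (ρ : G →* specialOrthogonalGroup (Fin 3) ℝ)

/-- The poles of a group acting by rotations through `ρ`: the points of the unit sphere on the
axes of its nontrivial elements. -/
def Pole : Type _ :=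
  {v : Fin 3 → ℝ // v ⬝ᵥ v = 1 ∧ ∃ g ≠ 1, (ρ g).1 *ᵥ v = v}

variable {ρ}

namespace Pole

instance : MulAction G (Pole ρ) where
  smul g v := ⟨(ρ g).1 *ᵥ v.1, by
    rw [dotProduct_mulVec_mulVec (ρ g).2.1, v.2.1], by
    obtain ⟨h, hh, hv⟩ := v.2.2
    refine ⟨g * h * g⁻¹, conj_eq_one_iff.not.2 hh, ?_⟩
    rw [mulVec_mulVec, ← Submonoid.coe_mul, ← map_mul, inv_mul_cancel_right, map_mul,
      Submonoid.coe_mul, ← mulVec_mulVec, hv]⟩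
  one_smul v := Subtype.ext (by
    change (ρ 1).1 *ᵥ v.1 = v.1
    rw [map_one, Submonoid.coe_one, one_mulVec])
  mul_smul g h v := Subtype.ext (by
    change (ρ (g * h)).1 *ᵥ v.1 = (ρ g).1 *ᵥ ((ρ h).1 *ᵥ v.1)
    rw [map_mul, Submonoid.coe_mul, mulVec_mulVec])

lemma smul_eq_iff {g : G} {v : Pole ρ} : g • v = v ↔ (ρ g).1 *ᵥ v.1 = v.1 :=
  Subtype.ext_iff

lemma stabilizer_ne_bot (v : Pole ρ) : MulAction.stabilizer G v ≠ ⊥ := by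
  obtain ⟨g, hg, hgv⟩ := v.2.2
  exact Subgroup.ne_bot_iff_exists_ne_one.2
    ⟨⟨g, smul_eq_iff.2 hgv⟩, fun h => hg (congrArg Subtype.val h)⟩

lemma fixesTwoPoints (hρ : Function.Injective ρ) : FixesTwoPoints G (Pole ρ) := by
  intro g hg
  obtain ⟨v, hv, hgv⟩ := exists_dotProduct_self_eq_one_mulVec_eq_self (ρ g).2
  have hv_ne : v ≠ -v := by
    intro h
    rw [self_eq_neg] at h
    simp [h] at hv
  refine Set.ncard_eq_two.2 ⟨⟨v, hv, g, hg, hgv⟩,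
    ⟨-v, by simpa using hv, g, hg, by rw [mulVec_neg, hgv]⟩,
    fun h => hv_ne (congrArg Subtype.val h), Set.ext fun w => ?_⟩
  rw [MulAction.mem_fixedBy, smul_eq_iff]
  constructor
  · intro hgw
    have hcross : v ⨯₃ w.1 = 0 := by
      by_contra hvw
      exact hg ((map_eq_one_iff ρ hρ).1 (eq_one_of_mulVec_eq_self hvw hgv hgw))
    exact (eq_or_eq_neg_of_cross_eq_zero hv w.2.1 hcross).imp Subtype.ext Subtype.ext
  · rintro (rfl | rfl)
    · exact hgv
    · exact (mulVec_neg _ _).trans (congrArg Neg.neg hgv)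

lemma isCyclic_stabilizer [Finite G] (hρ : Function.Injective ρ) (v : Pole ρ) :
    IsCyclic (MulAction.stabilizer G v) := by
  obtain ⟨u₀, hu₀, hu₀v⟩ := exists_ne_zero_dotProduct_eq_zero v.1
  obtain ⟨a, hu⟩ := exists_smul_dotProduct_self_eq_one hu₀
  set u := a • u₀
  have hvu : v.1 ⬝ᵥ u = 0 := by
    rw [dotProduct_smul, dotProduct_comm, hu₀v, smul_zero]
  have hvu_ne : v.1 ⨯₃ u ≠ 0 := fun h => by
    have := cross_dotProduct_cross_self_eq_one v.2.1 hu hvu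
    simp [h] at this
  have hinj := planeVec_injective v.2.1 hu hvu
  choose c hc using fun g : MulAction.stabilizer G v =>
    exists_mulVec_planeVec_eq v.2.1 hu hvu (ρ g).2 (smul_eq_iff.1 g.2)
  let f : MulAction.stabilizer G v →* ℂ :=
    { toFun := c
      map_one' := hinj (by simpa using (hc 1 1).symm)
      map_mul' := fun g h => hinj (by
        rw [← mul_one (c g * c h), mul_assoc, ← hc, ← hc, mulVec_mulVec, ← mul_one (c _), ← hc]
        simp) }
  have hf : Function.Injective f := by
    refine (injective_iff_map_eq_one f).2 ?_
    rintro g (hg : c g = 1)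
    have hgu : (ρ g).1 *ᵥ u = u := by
      simpa [hg, planeVec_apply] using hc g 1
    exact Subtype.ext ((map_eq_one_iff ρ hρ).1
      (eq_one_of_mulVec_eq_self hvu_ne (smul_eq_iff.1 g.2) hgu))
  exact isCyclic_of_injective_ringHom f hf

end Pole

end Poles

/-- Every finite subgroup of `SO(3)` — here, a finite subgroup of `GL(3, ℝ)` all of whose
elements are orthogonal matrices of determinant `1` — is isomorphic as an abstract group to
a cyclic group of order `n ≥ 1`, a dihedral group of order `2n` with `n ≥ 2`, the
tetrahedral group `A₄`, the octahedral group `S₄`, or the icosahedral group `A₅`. -/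
theorem stmt0 (G : Subgroup (GL (Fin 3) ℝ)) (hfin : Finite G)
    (horth : ∀ A : GL (Fin 3) ℝ, A ∈ G → (A : Matrix (Fin 3) (Fin 3) ℝ)ᵀ * A = 1)
    (hdet : ∀ A : GL (Fin 3) ℝ, A ∈ G → Matrix.det (A : Matrix (Fin 3) (Fin 3) ℝ) = 1) :
    (∃ n : ℕ, 1 ≤ n ∧ Nonempty (G ≃* Multiplicative (ZMod n))) ∨
    (∃ n : ℕ, 2 ≤ n ∧ Nonempty (G ≃* DihedralGroup n)) ∨
    Nonempty (G ≃* alternatingGroup (Fin 4)) ∨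
    Nonempty (G ≃* Equiv.Perm (Fin 4)) ∨
    Nonempty (G ≃* alternatingGroup (Fin 5)) := by
  let ρ : G →* specialOrthogonalGroup (Fin 3) ℝ :=
    ((Units.coeHom _).comp G.subtype).codRestrict _ fun A =>
      mem_specialOrthogonalGroup_iff.2
        ⟨(mem_orthogonalGroup_iff' (Fin 3) ℝ).2 (horth A A.2), hdet A A.2⟩
  have hρ : Function.Injective ρ := fun A B h =>
    Subtype.ext (Units.ext (congrArg Subtype.val h))
  have hclass := (Pole.fixesTwoPoints hρ).isCyclic_or_dihedral_or_polyhedral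
    (Pole.isCyclic_stabilizer hρ) Pole.stabilizer_ne_bot
  exact hclass.imp_left fun hcyclic =>
    ⟨Nat.card G, Nat.card_pos, ⟨(zmodCyclicMulEquiv hcyclic).symm⟩⟩
end

section
/- Let u and v be coprime positive integers. Two unit quaternions q = z₁ + z₂ j and q' = z₁' + z₂' j lie in the same orbit of the circle action w · (z₁ + z₂ j) = wᵛ z₁ + wᵘ z₂ j (that is, there exists a complex number w with |w| = 1 such that z₁' = wᵛ z₁ and z₂' = wᵘ z₂) if and only if z₁ᵘ (z₂')ᵛ = (z₁')ᵘ z₂ᵛ. -/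
/-!
On a sphere `‖z₁‖ ^ p + ‖z₂‖ ^ p = const` one coordinate can grow in norm only if the other
shrinks, so taking norms in `z₁ ^ u * z₂' ^ v = z₁' ^ u * z₂ ^ v` forces `‖z₁'‖ = ‖z₁‖` and
`‖z₂'‖ = ‖z₂‖`. If no coordinate vanishes, the ratios `α = z₁' / z₁` and `β = z₂' / z₂` satisfy
`α ^ u = β ^ v`, and Bézout's identity for `u` and `v` yields `w` with `α = w ^ v` and `β = w ^ u`.
If a coordinate vanishes, it is enough to take a root of the other ratio.
-/

theorem eq_and_eq_of_pow_add_eq_of_pow_mul_eq {R : Type*} [Semiring R] [LinearOrder R]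
    [IsStrictOrderedRing R] {p u v : ℕ} (hp : p ≠ 0) (hu : u ≠ 0) {a b c d : R} (ha : 0 ≤ a)
    (hb : 0 ≤ b) (hc : 0 ≤ c) (hd : 0 ≤ d) (hsum : a ^ p + b ^ p = c ^ p + d ^ p)
    (hmul : a ^ u * d ^ v = c ^ u * b ^ v) : a = c ∧ b = d := by
  have hac : a = c := by
    wlog hle : a ≤ c generalizing a b c d
    · exact (this hc hd ha hb hsum.symm hmul.symm (le_of_not_ge hle)).symm
    by_contra hne
    have hlt : a < c := lt_of_le_of_ne hle hne
    have hdb : d < b := by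
      by_contra! hbd
      exact (add_lt_add_of_lt_of_le (pow_lt_pow_left₀ hlt ha hp)
        (pow_le_pow_left₀ hb hbd p)).ne hsum
    exact (mul_lt_mul_of_lt_of_le_of_nonneg_of_pos (pow_lt_pow_left₀ hlt ha hu)
      (pow_le_pow_left₀ hd hdb.le v) (pow_nonneg ha u) (pow_pos (hd.trans_lt hdb) v)).ne hmul
  subst hac
  exact ⟨rfl, (pow_left_inj₀ hb hd hp).mp (add_left_cancel hsum)⟩

theorem norm_eq_one_of_norm_pow_mul_eq {K : Type*} [NormedDivisionRing K] {n : ℕ} (hn : n ≠ 0)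
    {w x : K} (hx : x ≠ 0) (h : ‖w ^ n * x‖ = ‖x‖) : ‖w‖ = 1 := by
  rw [norm_mul, norm_pow, mul_eq_right₀ (norm_ne_zero_iff.mpr hx)] at h
  exact (pow_eq_one_iff_of_nonneg (norm_nonneg w) hn).mp h

section IsAlgClosed

variable {K : Type*} [NormedField K] [IsAlgClosed K]

theorem exists_eq_pow_mul_of_norm_eq {n : ℕ} (hn : 0 < n) {x y : K} (h : ‖y‖ = ‖x‖) :
    ∃ w : K, ‖w‖ = 1 ∧ y = w ^ n * x := by
  obtain rfl | hx := eq_or_ne x 0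
  · exact ⟨1, by simpa using h⟩
  obtain ⟨w, hw⟩ := IsAlgClosed.exists_pow_nat_eq (y / x) hn
  have hy : y = w ^ n * x := by rw [hw, div_mul_cancel₀ y hx]
  exact ⟨w, norm_eq_one_of_norm_pow_mul_eq hn.ne' hx (hy ▸ h), hy⟩

theorem exists_eq_pow_mul_and_eq_pow_mul_of_norm_eq {u v : ℕ} (hu : 0 < u) (hv : 0 < v)
    (huv : u.Coprime v) {z₁ z₂ z₁' z₂' : K} (h₁ : ‖z₁'‖ = ‖z₁‖) (h₂ : ‖z₂'‖ = ‖z₂‖)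
    (h : z₁ ^ u * z₂' ^ v = z₁' ^ u * z₂ ^ v) :
    ∃ w : K, ‖w‖ = 1 ∧ z₁' = w ^ v * z₁ ∧ z₂' = w ^ u * z₂ := by
  obtain rfl | hz₂ := eq_or_ne z₂ 0
  · obtain rfl : z₂' = 0 := by simpa using h₂
    obtain ⟨w, hw, hz₁'⟩ := exists_eq_pow_mul_of_norm_eq hv h₁
    exact ⟨w, hw, hz₁', (mul_zero _).symm⟩
  obtain rfl | hz₁ := eq_or_ne z₁ 0
  · obtain rfl : z₁' = 0 := by simpa using h₁
    obtain ⟨w, hw, hz₂'⟩ := exists_eq_pow_mul_of_norm_eq hu h₂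
    exact ⟨w, hw, (mul_zero _).symm, hz₂'⟩
  have hratio : (z₁' / z₁) ^ u = (z₂' / z₂) ^ v := by
    rw [div_pow, div_pow, div_eq_div_iff (pow_ne_zero u hz₁) (pow_ne_zero v hz₂), ← h, mul_comm]
  obtain ⟨w, hw₁, hw₂⟩ := (pow_eq_pow_iff_of_coprime huv).mp hratio
  rw [div_eq_iff hz₁] at hw₁
  rw [div_eq_iff hz₂] at hw₂
  exact ⟨w, norm_eq_one_of_norm_pow_mul_eq hv.ne' hz₁ (hw₁ ▸ h₁), hw₁, hw₂⟩

theorem stmt6_general {p u v : ℕ} (hp : p ≠ 0) (hu : 0 < u) (hv : 0 < v) (huv : u.Coprime v)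
    {z₁ z₂ z₁' z₂' : K} (h : ‖z₁‖ ^ p + ‖z₂‖ ^ p = ‖z₁'‖ ^ p + ‖z₂'‖ ^ p) :
    (∃ w : K, ‖w‖ = 1 ∧ z₁' = w ^ v * z₁ ∧ z₂' = w ^ u * z₂) ↔
      z₁ ^ u * z₂' ^ v = z₁' ^ u * z₂ ^ v := by
  constructor
  · rintro ⟨w, -, rfl, rfl⟩
    ring
  · intro hpow
    have hnorm : ‖z₁‖ ^ u * ‖z₂'‖ ^ v = ‖z₁'‖ ^ u * ‖z₂‖ ^ v := by
      simpa using congrArg norm hpow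
    obtain ⟨h₁, h₂⟩ := eq_and_eq_of_pow_add_eq_of_pow_mul_eq hp hu.ne' (norm_nonneg z₁)
      (norm_nonneg z₂) (norm_nonneg z₁') (norm_nonneg z₂') h hnorm
    exact exists_eq_pow_mul_and_eq_pow_mul_of_norm_eq hu hv huv h₁.symm h₂.symm hpow

end IsAlgClosed

/-- Let `u, v` be coprime positive integers. Two unit quaternions `z₁ + z₂ j` and
`z₁' + z₂' j` (unit: `|z₁|² + |z₂|² = 1`) lie in the same orbit of the circle action
`w • (z₁ + z₂ j) = wᵛ z₁ + wᵘ z₂ j` if and only if `z₁ᵘ (z₂')ᵛ = (z₁')ᵘ z₂ᵛ`. -/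
theorem stmt6 (u v : ℕ) (hu : 0 < u) (hv : 0 < v) (huv : Nat.Coprime u v)
    (z₁ z₂ z₁' z₂' : ℂ)
    (h : Complex.normSq z₁ + Complex.normSq z₂ = 1)
    (h' : Complex.normSq z₁' + Complex.normSq z₂' = 1) :
    (∃ w : ℂ, ‖w‖ = 1 ∧ z₁' = w ^ v * z₁ ∧ z₂' = w ^ u * z₂) ↔
      z₁ ^ u * z₂' ^ v = z₁' ^ u * z₂ ^ v := by
  simp only [Complex.normSq_eq_norm_sq] at h h'
  exact stmt6_general two_ne_zero hu hv huv (h.trans h'.symm)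
end

section
/- Every finite subgroup of the group of unit quaternions is conjugate, by some unit quaternion, to one of the following subgroups: the cyclic group C_n for some n ≥ 1; the binary dihedral group D*₄ₙ for some n ≥ 2; the binary tetrahedral group T*; the binary octahedral group O*; or the binary icosahedral group I*. -/
open Quaternion
open scoped Quaternion

/-- The group of unit quaternions `S³`. -/
noncomputable abbrev UnitQuat : Type := Metric.sphere (0 : ℍ[ℝ]) 1

/-- The quaternion `cos(2π/n) + sin(2π/n) i`, a primitive `n`-th root of unity. -/
noncomputable def zetaQ (n : ℕ) : ℍ[ℝ] :=
  ⟨Real.cos (2 * Real.pi / n), Real.sin (2 * Real.pi / n), 0, 0⟩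

/-- The quaternion `i`. -/
def iQ : ℍ[ℝ] := ⟨0, 1, 0, 0⟩

/-- The quaternion `j`. -/
def jQ : ℍ[ℝ] := ⟨0, 0, 1, 0⟩

/-- The quaternion `ω = (1 + i + j + k)/2`. -/
noncomputable def omegaQ : ℍ[ℝ] := ⟨1/2, 1/2, 1/2, 1/2⟩

/-- The quaternion `(√2/2)(1 + j)`. -/
noncomputable def sigmaQ : ℍ[ℝ] := ⟨Real.sqrt 2 / 2, 0, Real.sqrt 2 / 2, 0⟩

/-- The golden ratio `τ = (1 + √5)/2`. -/
noncomputable def tau : ℝ := (1 + Real.sqrt 5) / 2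

/-- The quaternion `(τ⁻¹ + τ j + k)/2`. -/
noncomputable def iotaQ : ℍ[ℝ] := ⟨tau⁻¹ / 2, 0, tau / 2, 1 / 2⟩

/-- The cyclic subgroup `C_n` of the unit quaternions, generated by
`ζ_n = cos(2π/n) + sin(2π/n) i`. -/
noncomputable def CyclicQ (n : ℕ) : Subgroup UnitQuat :=
  Subgroup.closure {x : UnitQuat | (x : ℍ[ℝ]) = zetaQ n}

/-- The binary dihedral subgroup `D*₄ₙ` of the unit quaternions, generated by `ζ_{2n}`
and `j`. -/
noncomputable def BinDihQ (n : ℕ) : Subgroup UnitQuat :=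
  Subgroup.closure {x : UnitQuat | (x : ℍ[ℝ]) = zetaQ (2 * n) ∨ (x : ℍ[ℝ]) = jQ}

/-- The binary tetrahedral subgroup `T*` of the unit quaternions, generated by `i`, `j`
and `ω = (1 + i + j + k)/2`. -/
noncomputable def BinTetQ : Subgroup UnitQuat :=
  Subgroup.closure
    {x : UnitQuat | (x : ℍ[ℝ]) = iQ ∨ (x : ℍ[ℝ]) = jQ ∨ (x : ℍ[ℝ]) = omegaQ}

/-- The binary octahedral subgroup `O*` of the unit quaternions, generated by `T*` and
`(√2/2)(1 + j)`. -/
noncomputable def BinOctQ : Subgroup UnitQuat :=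
  Subgroup.closure ((BinTetQ : Set UnitQuat) ∪ {x : UnitQuat | (x : ℍ[ℝ]) = sigmaQ})

/-- The binary icosahedral subgroup `I*` of the unit quaternions, generated by `T*` and
`(τ⁻¹ + τ j + k)/2`. -/
noncomputable def BinIcoQ : Subgroup UnitQuat :=
  Subgroup.closure ((BinTetQ : Set UnitQuat) ∪ {x : UnitQuat | (x : ℍ[ℝ]) = iotaQ})

/-!
Let `H` be a finite group of unit quaternions containing `-1`. By Dirichlet's approximation theorem
the largest real part of a nontrivial element of `H` is `cos (π / m)` for some `m`. If an element
`a` attaining it commutes with all of its conjugates, then `H` preserves the circle through `1` and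
`a`, and is cyclic or binary dihedral. Otherwise `a` has a conjugate `b` that does not commute with
it; the real part of their commutator forces `m ≤ 5`, and the angles available in `H` determine the
real part of `a * b` up to replacing `b` by `b⁻¹`. Pairs of unit quaternions are classified up to
conjugacy by the real parts of `a`, `b` and `a * b`, so some conjugate of `H` contains the standard
group `K` attached to `m`. The two agree: every coset of `K` meets the Voronoi cell of `1`, where
all real parts exceed `cos (π / m)`.

A finite group `G` that does not contain `-1` has no element with real part `0`, since such an
element squares to `-1`. Then neither does `G ∪ -G`. Since all groups of the classification other
than the cyclic ones contain `j`, the group `G ∪ -G` is conjugate to a group of complex numbers, and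
so is `G`.
-/

open scoped Pointwise commutatorElement

namespace UnitQuat

section Coordinates

lemma normSq_coe (x : UnitQuat) : Quaternion.normSq x.1 = 1 := by
  rw [Quaternion.normSq_eq_norm_mul_self, norm_eq_of_mem_sphere, one_mul]

lemma sum_sq_coords (x : UnitQuat) :
    x.1.re ^ 2 + x.1.imI ^ 2 + x.1.imJ ^ 2 + x.1.imK ^ 2 = 1 := by
  rw [← Quaternion.normSq_def', normSq_coe]

/-- The unit quaternion `a + b i + c j + d k`. -/
def ofCoords (a b c d : ℝ) (h : a ^ 2 + b ^ 2 + c ^ 2 + d ^ 2 = 1) : UnitQuat :=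
  ⟨⟨a, b, c, d⟩, mem_sphere_zero_iff_norm.mpr <|
    (pow_eq_one_iff_of_nonneg (norm_nonneg _) two_ne_zero).mp <| (sq _).trans <|
      (Quaternion.normSq_eq_norm_mul_self _).symm.trans <| (Quaternion.normSq_def' _).trans h⟩

@[simp] lemma re_ofCoords (a b c d : ℝ) (h) : (ofCoords a b c d h).1.re = a := rfl
@[simp] lemma imI_ofCoords (a b c d : ℝ) (h) : (ofCoords a b c d h).1.imI = b := rfl
@[simp] lemma imJ_ofCoords (a b c d : ℝ) (h) : (ofCoords a b c d h).1.imJ = c := rfl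
@[simp] lemma imK_ofCoords (a b c d : ℝ) (h) : (ofCoords a b c d h).1.imK = d := rfl

protected lemma ext {x y : UnitQuat} (hre : x.1.re = y.1.re) (hI : x.1.imI = y.1.imI)
    (hJ : x.1.imJ = y.1.imJ) (hK : x.1.imK = y.1.imK) : x = y :=
  Subtype.ext (Quaternion.ext _ _ hre hI hJ hK)

@[simp] lemma inv_coe_eq_star (x : UnitQuat) : (x.1)⁻¹ = star x.1 := by
  rw [Quaternion.inv_def, normSq_coe, inv_one, one_smul]

lemma re_sq_le_one (x : UnitQuat) : x.1.re ^ 2 ≤ 1 := by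
  linarith [sum_sq_coords x, sq_nonneg x.1.imI, sq_nonneg x.1.imJ, sq_nonneg x.1.imK]

lemma neg_one_le_re (x : UnitQuat) : -1 ≤ x.1.re :=
  (abs_le.mp ((sq_le_one_iff_abs_le_one _).mp (re_sq_le_one x))).1

lemma re_le_one (x : UnitQuat) : x.1.re ≤ 1 :=
  (abs_le.mp ((sq_le_one_iff_abs_le_one _).mp (re_sq_le_one x))).2

lemma cos_arccos_re (x : UnitQuat) : Real.cos (Real.arccos x.1.re) = x.1.re :=
  Real.cos_arccos (neg_one_le_re x) (re_le_one x)

lemma neg_one_ne_one : (-1 : UnitQuat) ≠ 1 := fun h => by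
  have hre : (-1 : ℝ) = 1 := congrArg (fun q : UnitQuat => q.1.re) h
  norm_num at hre

lemma eq_one_of_re_eq_one {x : UnitQuat} (h : x.1.re = 1) : x = 1 := by
  have hx := sum_sq_coords x
  rw [h] at hx
  apply UnitQuat.ext <;>
    simp only [h, Metric.unitSphere.coe_one, re_one, imI_one, imJ_one, imK_one] <;>
    nlinarith [sq_nonneg x.1.imI, sq_nonneg x.1.imJ, sq_nonneg x.1.imK]

lemma re_lt_one {x : UnitQuat} (h : x ≠ 1) : x.1.re < 1 :=
  lt_of_le_of_ne (re_le_one x) fun hx => h (eq_one_of_re_eq_one hx)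

lemma re_sq_lt_one {x : UnitQuat} (h₁ : x ≠ 1) (h₂ : x ≠ -1) : x.1.re ^ 2 < 1 := by
  have hneg : (-x).1.re < 1 := re_lt_one (by simpa [neg_eq_iff_eq_neg] using h₂)
  rw [coe_neg_sphere, Quaternion.re_neg] at hneg
  nlinarith [re_lt_one h₁]

lemma sq_eq_neg_one_of_re_eq_zero {x : UnitQuat} (h : x.1.re = 0) : x ^ 2 = -1 :=
  Subtype.ext <| by simp [Quaternion.sq_eq_neg_normSq.mpr h, normSq_coe]

lemma re_conj (u x : UnitQuat) : (u * x * u⁻¹).1.re = x.1.re := by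
  simp only [Metric.unitSphere.coe_mul, Metric.unitSphere.coe_inv, inv_coe_eq_star, re_mul, imI_mul,
    imJ_mul, imK_mul, re_star, imI_star, imJ_star, imK_star]
  linear_combination x.1.re * sum_sq_coords u

lemma re_mul_add_re_mul_inv (x y : UnitQuat) :
    (x * y).1.re + (x * y⁻¹).1.re = 2 * x.1.re * y.1.re := by
  simp only [Metric.unitSphere.coe_mul, Metric.unitSphere.coe_inv, inv_coe_eq_star, re_mul, re_star,
    imI_star, imJ_star, imK_star]
  ring

lemma re_commutator (x y : UnitQuat) :
    ⁅x, y⁆.1.re = 2 * x.1.re ^ 2 + 2 * y.1.re ^ 2 + 2 * (x * y).1.re ^ 2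
      - 4 * x.1.re * y.1.re * (x * y).1.re - 1 := by
  have hx := sum_sq_coords x
  have hy := sum_sq_coords y
  simp only [commutatorElement_def, Metric.unitSphere.coe_mul, Metric.unitSphere.coe_inv,
    inv_coe_eq_star, re_mul, imI_mul, imJ_mul, imK_mul, re_star, imI_star, imJ_star, imK_star]
  linear_combination
    (2 * y.1.re ^ 2 - (y.1.re ^ 2 + y.1.imI ^ 2 + y.1.imJ ^ 2 + y.1.imK ^ 2)) * hx +
      (2 * x.1.re ^ 2 - 1) * hy

end Coordinates

section NormalForm

/-- The circle `ℂ ∩ S³` of unit quaternions `a + b i`. -/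
def complexUnits : Subgroup UnitQuat where
  carrier := {x | x.1.imJ = 0 ∧ x.1.imK = 0}
  mul_mem' := by
    rintro x y ⟨hxJ, hxK⟩ ⟨hyJ, hyK⟩
    simp [hxJ, hxK, hyJ, hyK]
  one_mem' := by simp
  inv_mem' := by simp

lemma mem_complexUnits {x : UnitQuat} : x ∈ complexUnits ↔ x.1.imJ = 0 ∧ x.1.imK = 0 := Iff.rfl

lemma commute_of_mem_complexUnits {x y : UnitQuat} (hx : x ∈ complexUnits)
    (hy : y ∈ complexUnits) : Commute x y := by
  rw [mem_complexUnits] at hx hy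
  apply UnitQuat.ext <;>
    simp only [Metric.unitSphere.coe_mul, re_mul, imI_mul, imJ_mul, imK_mul, hx, hy] <;> ring

lemma imI_ne_zero_of_mem_complexUnits {x : UnitQuat} (hx : x ∈ complexUnits)
    (hne : x.1.re ^ 2 < 1) : x.1.imI ≠ 0 := by
  intro hI
  have hsq := sum_sq_coords x
  rw [hI, hx.1, hx.2] at hsq
  linarith

lemma mem_complexUnits_of_commute {x y : UnitQuat} (hx : x ∈ complexUnits)
    (hne : x.1.re ^ 2 < 1) (hxy : Commute x y) : y ∈ complexUnits := by
  have hI := imI_ne_zero_of_mem_complexUnits hx hne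
  rw [mem_complexUnits] at hx
  have hJ := congrArg (fun q : UnitQuat => q.1.imJ) hxy.eq
  have hK := congrArg (fun q : UnitQuat => q.1.imK) hxy.eq
  simp only [Metric.unitSphere.coe_mul, imJ_mul, imK_mul, hx] at hJ hK
  refine ⟨mul_left_cancel₀ hI ?_, mul_left_cancel₀ hI ?_⟩ <;> linarith

/-- The pairs `(a, b)` with `a` on the half-circle `re a + ℝ≥0 i` and `b` in the half-space
`ℝ + ℝ i + ℝ≥0 j`; every pair of unit quaternions is conjugate to one of these. -/
structure IsNormalPair (a b : UnitQuat) : Prop where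
  imI_nonneg : 0 ≤ a.1.imI
  mem_complexUnits : a ∈ complexUnits
  imJ_nonneg : 0 ≤ b.1.imJ
  imK_eq_zero : b.1.imK = 0

lemma exists_half_angle (y z : ℝ) : ∃ r c s : ℝ, 0 ≤ r ∧ c ^ 2 + s ^ 2 = 1 ∧
    y = r * (c ^ 2 - s ^ 2) ∧ z = r * (2 * s * c) := by
  set φ := Complex.arg ⟨y, z⟩ / 2 with hφ
  refine ⟨‖(⟨y, z⟩ : ℂ)‖, Real.cos φ, Real.sin φ, norm_nonneg _, Real.cos_sq_add_sin_sq φ, ?_, ?_⟩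
  · rw [← Real.cos_two_mul', hφ, mul_div_cancel₀ _ two_ne_zero, Complex.norm_mul_cos_arg]
  · rw [← Real.sin_two_mul, hφ, mul_div_cancel₀ _ two_ne_zero, Complex.norm_mul_sin_arg]

lemma exists_mem_complexUnits_conj_imK_eq_zero (x : UnitQuat) : ∃ u ∈ complexUnits,
    0 ≤ (u * x * u⁻¹).1.imJ ∧ (u * x * u⁻¹).1.imK = 0 := by
  obtain ⟨r, c, s, hr, hcs, hJ, hK⟩ := exists_half_angle x.1.imJ x.1.imK
  refine ⟨ofCoords c (-s) 0 0 (by linarith), ⟨rfl, rfl⟩, ?_, ?_⟩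
  · convert hr
    simp [hJ, hK]
    linear_combination r * (c ^ 2 + s ^ 2 + 1) * hcs
  · simp [hJ, hK]
    ring

lemma exists_conj_mem_complexUnits_of_imK_eq_zero {x : UnitQuat} (hx : x.1.imK = 0) :
    ∃ u : UnitQuat, 0 ≤ (u * x * u⁻¹).1.imI ∧ u * x * u⁻¹ ∈ complexUnits := by
  obtain ⟨r, c, s, hr, hcs, hI, hJ⟩ := exists_half_angle x.1.imI x.1.imJ
  refine ⟨ofCoords c 0 0 (-s) (by linarith), ?_, ?_⟩
  · convert hr
    simp [hI, hJ, hx]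
    linear_combination r * (c ^ 2 + s ^ 2 + 1) * hcs
  · constructor <;> simp [hI, hJ, hx] <;> ring

lemma exists_conj_mem_complexUnits (x : UnitQuat) :
    ∃ u : UnitQuat, 0 ≤ (u * x * u⁻¹).1.imI ∧ u * x * u⁻¹ ∈ complexUnits := by
  obtain ⟨v, -, -, hv⟩ := exists_mem_complexUnits_conj_imK_eq_zero x
  obtain ⟨w, hI, hw⟩ := exists_conj_mem_complexUnits_of_imK_eq_zero hv
  have hconj : w * (v * x * v⁻¹) * w⁻¹ = w * v * x * (w * v)⁻¹ := by group
  rw [hconj] at hI hw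
  exact ⟨w * v, hI, hw⟩

lemma exists_conj_isNormalPair (a b : UnitQuat) :
    ∃ u : UnitQuat, IsNormalPair (u * a * u⁻¹) (u * b * u⁻¹) := by
  obtain ⟨v, hI, hv⟩ := exists_conj_mem_complexUnits a
  obtain ⟨w, hw, hJ, hK⟩ := exists_mem_complexUnits_conj_imK_eq_zero (v * b * v⁻¹)
  have ha : w * v * a * (w * v)⁻¹ = v * a * v⁻¹ := by
    rw [← (commute_of_mem_complexUnits hw hv).mul_inv_cancel]
    group
  have hb : w * v * b * (w * v)⁻¹ = w * (v * b * v⁻¹) * w⁻¹ := by group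
  exact ⟨w * v, ha ▸ hI, ha ▸ hv, hb ▸ hJ, hb ▸ hK⟩

lemma IsNormalPair.eq_and_eq {a b a' b' : UnitQuat} (h : IsNormalPair a b)
    (h' : IsNormalPair a' b') (ha : a.1.re = a'.1.re) (hb : b.1.re = b'.1.re)
    (hab : (a * b).1.re = (a' * b').1.re) (hne : a.1.re ^ 2 < 1) : a = a' ∧ b = b' := by
  obtain ⟨hI, ⟨haJ, haK⟩, hJ, hbK⟩ := h
  obtain ⟨hI', ⟨haJ', haK'⟩, hJ', hbK'⟩ := h'
  have hsq_a := sum_sq_coords a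
  have hsq_b := sum_sq_coords b
  have hsq_a' := sum_sq_coords a'
  have hsq_b' := sum_sq_coords b'
  rw [Metric.unitSphere.coe_mul, Metric.unitSphere.coe_mul, Quaternion.re_mul, Quaternion.re_mul,
    haJ, haK, haJ', haK', ha, hb] at hab
  have haI : a.1.imI = a'.1.imI :=
    (sq_eq_sq₀ hI hI').mp (by rw [haJ, haK, ha] at hsq_a; rw [haJ', haK'] at hsq_a'; linarith)
  have hbI : b.1.imI = b'.1.imI := by
    rw [haI] at hab
    exact mul_left_cancel₀ (imI_ne_zero_of_mem_complexUnits ⟨haJ', haK'⟩ (ha ▸ hne)) (by linarith)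
  have hbJ : b.1.imJ = b'.1.imJ :=
    (sq_eq_sq₀ hJ hJ').mp (by rw [hbK, hb, hbI] at hsq_b; rw [hbK'] at hsq_b'; linarith)
  exact ⟨UnitQuat.ext ha haI (haJ.trans haJ'.symm) (haK.trans haK'.symm),
    UnitQuat.ext hb hbI hbJ (hbK.trans hbK'.symm)⟩

lemma exists_conj_eq_and_conj_eq {a b a' b' : UnitQuat} (ha : a.1.re = a'.1.re)
    (hb : b.1.re = b'.1.re) (hab : (a * b).1.re = (a' * b').1.re) (hne : a.1.re ^ 2 < 1) :
    ∃ u : UnitQuat, u * a * u⁻¹ = a' ∧ u * b * u⁻¹ = b' := by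
  obtain ⟨v, hv⟩ := exists_conj_isNormalPair a b
  obtain ⟨w, hw⟩ := exists_conj_isNormalPair a' b'
  obtain ⟨hva, hvb⟩ := hv.eq_and_eq hw (by simpa only [re_conj]) (by simpa only [re_conj])
    (by simpa only [conj_mul, re_conj]) (by simpa only [re_conj])
  refine ⟨w⁻¹ * v, ?_, ?_⟩
  · calc w⁻¹ * v * a * (w⁻¹ * v)⁻¹ = w⁻¹ * (v * a * v⁻¹) * w := by group
      _ = a' := by rw [hva]; group
  · calc w⁻¹ * v * b * (w⁻¹ * v)⁻¹ = w⁻¹ * (v * b * v⁻¹) * w := by group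
      _ = b' := by rw [hvb]; group

end NormalForm

section Exponential

/-- The one-parameter subgroup `θ ↦ cos θ + sin θ i` of the unit quaternions. -/
noncomputable def expI : AddChar ℝ UnitQuat where
  toFun θ := ofCoords (Real.cos θ) (Real.sin θ) 0 0 (by simp)
  map_zero_eq_one' := by apply UnitQuat.ext <;> simp
  map_add_eq_mul' θ φ := by
    apply UnitQuat.ext <;> simp [Real.cos_add, Real.sin_add]
    ring

@[simp] lemma re_expI (θ : ℝ) : (expI θ).1.re = Real.cos θ := rfl
@[simp] lemma imI_expI (θ : ℝ) : (expI θ).1.imI = Real.sin θ := rfl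
@[simp] lemma imJ_expI (θ : ℝ) : (expI θ).1.imJ = 0 := rfl
@[simp] lemma imK_expI (θ : ℝ) : (expI θ).1.imK = 0 := rfl

lemma expI_mem_complexUnits (θ : ℝ) : expI θ ∈ complexUnits := ⟨rfl, rfl⟩

lemma exists_expI_eq {x : UnitQuat} (hx : x ∈ complexUnits) : ∃ θ, expI θ = x := by
  have hnorm : ‖(⟨x.1.re, x.1.imI⟩ : ℂ)‖ = 1 := by
    have hsq := sum_sq_coords x
    rw [hx.1, hx.2] at hsq
    rw [Complex.norm_def, Complex.normSq_mk, Real.sqrt_eq_one]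
    linarith
  refine ⟨Complex.arg ⟨x.1.re, x.1.imI⟩, UnitQuat.ext ?_ ?_ hx.1.symm hx.2.symm⟩
  · simpa [hnorm] using Complex.norm_mul_cos_arg ⟨x.1.re, x.1.imI⟩
  · simpa [hnorm] using Complex.norm_mul_sin_arg ⟨x.1.re, x.1.imI⟩

lemma expI_eq_one_iff {θ : ℝ} : expI θ = 1 ↔ ∃ k : ℤ, k * (2 * Real.pi) = θ := by
  rw [← Real.cos_eq_one_iff]
  exact ⟨fun h => congrArg (fun q : UnitQuat => q.1.re) h, fun h => eq_one_of_re_eq_one h⟩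

lemma exists_conj_eq_expI_arccos (x : UnitQuat) :
    ∃ u : UnitQuat, u * x * u⁻¹ = expI (Real.arccos x.1.re) := by
  obtain ⟨u, hI, hu⟩ := exists_conj_mem_complexUnits x
  have hsq := sum_sq_coords (u * x * u⁻¹)
  rw [hu.1, hu.2, re_conj] at hsq
  refine ⟨u, UnitQuat.ext ?_ ?_ hu.1 hu.2⟩
  · rw [re_conj, re_expI, cos_arccos_re]
  · rw [imI_expI, Real.sin_arccos, eq_comm, Real.sqrt_eq_iff_eq_sq (by nlinarith) hI]
    linarith

lemma re_pow (x : UnitQuat) (n : ℕ) : (x ^ n).1.re = Real.cos (n * Real.arccos x.1.re) := by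
  obtain ⟨u, hu⟩ := exists_conj_eq_expI_arccos x
  rw [← re_conj u, ← conj_pow, hu, ← AddChar.map_nsmul_eq_pow, re_expI, nsmul_eq_mul]

lemma orderOf_expI {n : ℕ} (hn : 0 < n) : orderOf (expI (2 * Real.pi / n)) = n := by
  rw [orderOf_eq_iff hn]
  have hn' : (n : ℝ) ≠ 0 := by positivity
  constructor
  · rw [← AddChar.map_nsmul_eq_pow, expI_eq_one_iff]
    refine ⟨1, ?_⟩
    rw [nsmul_eq_mul]
    push_cast
    field_simp
  · intro m hmn hm h
    rw [← AddChar.map_nsmul_eq_pow, expI_eq_one_iff] at h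
    obtain ⟨k, hk⟩ := h
    rw [nsmul_eq_mul] at hk
    field_simp at hk
    have hdvd : n ∣ m := Int.natCast_dvd_natCast.mp ⟨k, by rw [mul_comm]; exact_mod_cast hk.symm⟩
    exact absurd (Nat.le_of_dvd hm hdvd) hmn.not_ge

lemma cyclicQ_eq_zpowers (n : ℕ) : CyclicQ n = Subgroup.zpowers (expI (2 * Real.pi / n)) := by
  rw [Subgroup.zpowers_eq_closure, CyclicQ]
  congr 1
  ext x
  exact (Subtype.ext_iff (a2 := expI (2 * Real.pi / n))).symm

lemma card_cyclicQ {n : ℕ} (hn : 0 < n) : Nat.card (CyclicQ n) = n := by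
  rw [cyclicQ_eq_zpowers, Nat.card_zpowers, orderOf_expI hn]

theorem eq_cyclicQ_of_le_complexUnits {H : Subgroup UnitQuat} [Finite H] (hH : H ≤ complexUnits) :
    H = CyclicQ (Nat.card H) := by
  have hcard : Nat.card H ≠ 0 := Nat.card_pos.ne'
  have hle : H ≤ CyclicQ (Nat.card H) := by
    intro x hx
    obtain ⟨θ, rfl⟩ := exists_expI_eq (hH hx)
    have hpow : expI θ ^ Nat.card H = 1 := orderOf_dvd_iff_pow_eq_one.mp (H.orderOf_dvd_natCard hx)
    rw [← AddChar.map_nsmul_eq_pow, expI_eq_one_iff] at hpow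
    obtain ⟨k, hk⟩ := hpow
    rw [nsmul_eq_mul] at hk
    rw [cyclicQ_eq_zpowers, Subgroup.mem_zpowers_iff]
    refine ⟨k, ?_⟩
    rw [← AddChar.map_zsmul_eq_zpow, zsmul_eq_mul]
    congr 1
    field_simp
    linarith
  have : Finite (CyclicQ (Nat.card H)) :=
    Nat.finite_of_card_ne_zero (by rwa [card_cyclicQ Nat.card_pos])
  exact Subgroup.eq_of_le_of_card_ge hle (card_cyclicQ Nat.card_pos).le

end Exponential

section LargestRealPart

variable {H : Subgroup UnitQuat}

lemma neg_mem_of_neg_one_mem (hneg : -1 ∈ H) {x : UnitQuat} (hx : x ∈ H) : -x ∈ H :=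
  neg_one_mul x ▸ H.mul_mem hneg hx

lemma exists_mem_re_eq_cos_sub (hneg : -1 ∈ H) {x : UnitQuat} (hx : x ∈ H) (k : ℕ) (l : ℤ) :
    ∃ y ∈ H, y.1.re = Real.cos (k * Real.arccos x.1.re - l * Real.pi) := by
  have hk := H.pow_mem hx k
  rw [Real.cos_sub_int_mul_pi, ← re_pow]
  rcases l.even_or_odd with hl | hl
  · exact ⟨x ^ k, hk, by rw [hl.neg_one_zpow (α := ℝ), one_mul]⟩
  · exact ⟨-x ^ k, neg_mem_of_neg_one_mem hneg hk, by simp [hl.neg_one_zpow (α := ℝ)]⟩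

-- Dirichlet's approximation theorem puts some `±x ^ k` within angle `π / (m + 1)` of `1`.
lemma exists_mul_arccos_re_eq_mul_pi {m : ℕ} (hm : 0 < m) (hneg : -1 ∈ H)
    (hH : ∀ x ∈ H, x ≠ 1 → x.1.re < Real.cos (Real.pi / (m + 1))) {x : UnitQuat} (hx : x ∈ H) :
    ∃ k : ℕ, ∃ l : ℤ, 0 < k ∧ k ≤ m ∧ k * Real.arccos x.1.re = l * Real.pi := by
  have hpi := Real.pi_pos
  obtain ⟨l, k, hk, hkm, hdist⟩ :=
    Real.exists_int_int_abs_mul_sub_le (Real.arccos x.1.re / Real.pi) hm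
  lift k to ℕ using hk.le
  obtain ⟨y, hy, hre⟩ := exists_mem_re_eq_cos_sub hneg hx k l
  set δ := k * Real.arccos x.1.re - l * Real.pi with hδ
  have hδ_le : |δ| ≤ Real.pi / (m + 1) := by
    calc |δ| = |((k : ℤ) : ℝ) * (Real.arccos x.1.re / Real.pi) - l| * Real.pi := by
          rw [← abs_of_pos hpi, ← abs_mul, abs_of_pos hpi, hδ]
          congr 1
          push_cast
          field_simp
      _ ≤ 1 / (m + 1) * Real.pi := by gcongr
      _ = Real.pi / (m + 1) := by ring
  have hm1 : Real.pi / (m + 1) ≤ Real.pi :=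
    div_le_self hpi.le (by linarith [m.cast_nonneg (α := ℝ)])
  have hy1 : y = 1 := by
    by_contra hy1
    refine (hH y hy hy1).not_ge ?_
    rw [hre, ← Real.cos_abs δ]
    exact Real.cos_le_cos_of_nonneg_of_le_pi (abs_nonneg δ) hm1 hδ_le
  have hδ0 : δ = 0 := by
    obtain ⟨h₁, h₂⟩ := abs_le.mp hδ_le
    refine (Real.cos_eq_one_iff_of_lt_of_lt (by linarith) (by linarith)).mp ?_
    rw [← hre, hy1, Metric.unitSphere.coe_one, Quaternion.re_one]
  exact ⟨k, l, by exact_mod_cast hk, by exact_mod_cast hkm, sub_eq_zero.mp hδ0⟩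

/-- Every nontrivial element of `H` makes an angle of at least `π / m` with `1` in `S³`; this is no
condition for `m = 0`, as `π / 0 = 0`. -/
def IsSeparated (H : Subgroup UnitQuat) (m : ℕ) : Prop :=
  ∀ x ∈ H, x ≠ 1 → x.1.re ≤ Real.cos (Real.pi / m)

theorem exists_isSeparated_re_eq_cos_pi_div [Finite H] (hneg : -1 ∈ H) :
    ∃ m : ℕ, 0 < m ∧ (∃ a ∈ H, a ≠ 1 ∧ a.1.re = Real.cos (Real.pi / m)) ∧
      IsSeparated H m := by
  have hfin : ((H : Set UnitQuat) \ {1}).Finite := (Set.toFinite _).subset Set.sdiff_subset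
  obtain ⟨a, ⟨ha, ha1⟩, hmax⟩ := hfin.exists_maximalFor (fun q => q.1.re) _
    ⟨-1, hneg, neg_one_ne_one⟩
  have hmax' : ∀ x ∈ H, x ≠ 1 → x.1.re ≤ a.1.re := fun x hx hx1 =>
    (le_total _ _).elim id (hmax ⟨hx, hx1⟩)
  set θ := Real.arccos a.1.re
  have hθ0 : 0 < θ := Real.arccos_pos.mpr (re_lt_one ha1)
  have hθpi : θ ≤ Real.pi := Real.arccos_le_pi _
  set m := ⌊Real.pi / θ⌋₊
  have hm0 : 0 < m := Nat.floor_pos.mpr ((one_le_div hθ0).mpr hθpi)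
  have hm1 : Real.pi / (m + 1) < θ := by
    rw [div_lt_comm₀ (by positivity) hθ0]
    exact Nat.lt_floor_add_one _
  have hlt : ∀ x ∈ H, x ≠ 1 → x.1.re < Real.cos (Real.pi / (m + 1)) := fun x hx hx1 =>
    (hmax' x hx hx1).trans_lt <| by
      rw [← cos_arccos_re a]
      exact Real.cos_lt_cos_of_nonneg_of_le_pi (by positivity) hθpi hm1
  obtain ⟨k, l, hk, hkm, hkl⟩ := exists_mul_arccos_re_eq_mul_pi hm0 hneg hlt ha
  have hl : l = 1 := by
    have hkθ : 0 < k * θ := by positivity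
    have hkθ' : k * θ ≤ Real.pi := by
      calc (k : ℝ) * θ ≤ Real.pi / θ * θ := by
            gcongr
            exact (Nat.cast_le.mpr hkm).trans (Nat.floor_le (by positivity))
        _ = Real.pi := div_mul_cancel₀ _ hθ0.ne'
    rw [hkl] at hkθ hkθ'
    have h0 : 0 < l := by exact_mod_cast pos_of_mul_pos_left hkθ Real.pi_pos.le
    have h1 : l ≤ 1 := by exact_mod_cast (mul_le_iff_le_one_left Real.pi_pos).mp hkθ'
    omega
  have hθk : θ = Real.pi / k := by
    rw [eq_div_iff (by positivity), mul_comm, hkl, hl, Int.cast_one, one_mul]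
  have ha_re : a.1.re = Real.cos (Real.pi / k) := by rw [← hθk, cos_arccos_re]
  exact ⟨k, hk, ⟨a, ha, ha1, ha_re⟩, fun x hx hx1 => (hmax' x hx hx1).trans_eq ha_re⟩

end LargestRealPart

section NonCommutingPair

variable {H : Subgroup UnitQuat} {m : ℕ}

lemma one_le_of_not_commute {a b : UnitQuat} {t : ℝ} (ha : a.1.re = t) (hb : b.1.re = t)
    (hab : ¬Commute a b) (hcomm : ⁅a, b⁆.1.re ≤ t) : 1 ≤ 2 * (1 - t ^ 2) * (1 + t) := by
  have ht : t < 1 := ha ▸ re_lt_one fun h => hab (h ▸ Commute.one_left b)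
  rw [re_commutator, ha, hb] at hcomm
  have hprod : 1 - t ≤ (1 - t) * (2 * (1 - t ^ 2) * (1 + t)) := by
    nlinarith [sq_nonneg ((a * b).1.re - t ^ 2)]
  exact (le_mul_iff_one_le_right (sub_pos.mpr ht)).mp hprod

lemma IsSeparated.two_le_and_le_five (hH : IsSeparated H m) (hm : 0 < m) {a b : UnitQuat}
    (ha : a ∈ H) (hb : b ∈ H) (ha_re : a.1.re = Real.cos (Real.pi / m))
    (hb_re : b.1.re = Real.cos (Real.pi / m)) (hab : ¬Commute a b) : 2 ≤ m ∧ m ≤ 5 := by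
  have hcomm : ⁅a, b⁆ ≠ 1 := fun h => hab (commutatorElement_eq_one_iff_commute.mp h)
  have hmem : ⁅a, b⁆ ∈ H := H.commutator_le_self (Subgroup.commutator_mem_commutator ha hb)
  have hle := one_le_of_not_commute ha_re hb_re hab (hH _ hmem hcomm)
  constructor
  · by_contra! h
    obtain rfl : m = 1 := by omega
    norm_num at hle
  · by_contra! h
    have hcos : √3 / 2 ≤ Real.cos (Real.pi / m) := by
      rw [← Real.cos_pi_div_six]
      refine Real.cos_le_cos_of_nonneg_of_le_pi (by positivity) (by linarith [Real.pi_pos]) ?_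
      gcongr
      exact_mod_cast h
    have hsq : 3 / 4 ≤ Real.cos (Real.pi / m) ^ 2 := by
      nlinarith [Real.sq_sqrt (show (0 : ℝ) ≤ 3 by norm_num), Real.sqrt_nonneg 3]
    have hlt : Real.cos (Real.pi / m) < 1 :=
      ha_re ▸ re_lt_one fun h => hab (h ▸ Commute.one_left b)
    have hpos : 0 ≤ 1 + Real.cos (Real.pi / m) := by linarith [Real.sqrt_nonneg 3]
    nlinarith [mul_nonneg (sub_nonneg.mpr hsq) hpos]

lemma re_le_cos_pi_div_iff {x : UnitQuat} {k n : ℕ} {l : ℤ} (hk : 0 < k) (hn : 0 < n)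
    (hkl : k * Real.arccos x.1.re = l * Real.pi) :
    x.1.re ≤ Real.cos (Real.pi / n) ↔ k ≤ n * l := by
  have hn1 : (1 : ℝ) ≤ n := by exact_mod_cast hn
  rw [← Real.strictAntiOn_arccos.le_iff_ge ⟨Real.neg_one_le_cos _, Real.cos_le_one _⟩
      ⟨neg_one_le_re x, re_le_one x⟩,
    Real.arccos_cos (by positivity) (div_le_self Real.pi_pos.le hn1),
    ← mul_le_mul_iff_right₀ (show (0 : ℝ) < k by positivity), hkl, ← mul_div_assoc,
    div_le_iff₀ (by positivity), mul_right_comm, mul_le_mul_iff_left₀ Real.pi_pos, mul_comm]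
  exact_mod_cast Iff.rfl

lemma cos_pi_div_le_re_iff {x : UnitQuat} {k n : ℕ} {l : ℤ} (hk : 0 < k) (hn : 0 < n)
    (hkl : k * Real.arccos x.1.re = l * Real.pi) :
    Real.cos (Real.pi / n) ≤ x.1.re ↔ n * l ≤ k := by
  have hn1 : (1 : ℝ) ≤ n := by exact_mod_cast hn
  rw [← Real.strictAntiOn_arccos.le_iff_ge ⟨neg_one_le_re x, re_le_one x⟩
      ⟨Real.neg_one_le_cos _, Real.cos_le_one _⟩,
    Real.arccos_cos (by positivity) (div_le_self Real.pi_pos.le hn1),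
    ← mul_le_mul_iff_right₀ (show (0 : ℝ) < k by positivity), hkl, ← mul_div_assoc,
    le_div_iff₀ (by positivity), mul_right_comm, mul_le_mul_iff_left₀ Real.pi_pos, mul_comm]
  exact_mod_cast Iff.rfl

lemma IsSeparated.exists_mul_arccos_re_eq_mul_pi (hH : IsSeparated H m) (hm : 0 < m)
    (hneg : -1 ∈ H) {x : UnitQuat} (hx : x ∈ H) :
    ∃ k : ℕ, ∃ l : ℤ, 0 < k ∧ k ≤ m ∧ k * Real.arccos x.1.re = l * Real.pi := by
  refine UnitQuat.exists_mul_arccos_re_eq_mul_pi hm hneg (fun y hy hy1 => ?_) hx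
  have hm1 : (1 : ℝ) ≤ m := by exact_mod_cast hm
  refine (hH y hy hy1).trans_lt (Real.cos_lt_cos_of_nonneg_of_le_pi (by positivity)
    (div_le_self Real.pi_pos.le hm1) ?_)
  gcongr
  linarith

lemma cos_pi_div_five_eq_tau_div_two : Real.cos (Real.pi / (5 : ℕ)) = tau / 2 := by
  rw [Nat.cast_ofNat, Real.cos_pi_div_five, tau]
  ring

-- `re x` is `cos (l * π / k)` with `k ≤ m`, and only one such angle lies in the allowed range.
lemma IsSeparated.re_eq_zero_or_half (hH : IsSeparated H m) (hm : 2 ≤ m) (hm' : m ≤ 5)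
    (hneg : -1 ∈ H) {x : UnitQuat} (hx : x ∈ H)
    (hle : x.1.re ≤ Real.cos (Real.pi / m) ^ 2)
    (hge : 2 * Real.cos (Real.pi / m) ^ 2 - Real.cos (Real.pi / m) ≤ x.1.re) :
    x.1.re = if m ≤ 3 then 0 else 1 / 2 := by
  obtain ⟨k, l, hk, hkm, hkl⟩ := hH.exists_mul_arccos_re_eq_mul_pi (by omega) hneg hx
  have h₂ := re_le_cos_pi_div_iff hk two_pos hkl
  have h₂' := cos_pi_div_le_re_iff hk two_pos hkl
  have h₃ := re_le_cos_pi_div_iff hk three_pos hkl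
  have h₃' := cos_pi_div_le_re_iff hk three_pos hkl
  have h₄ := cos_pi_div_le_re_iff hk four_pos hkl
  simp only [Nat.cast_ofNat, Real.cos_pi_div_two, Real.cos_pi_div_three, Real.cos_pi_div_four]
    at h₂ h₂' h₃ h₃' h₄
  have hsqrt2 := Real.sq_sqrt (show (0 : ℝ) ≤ 2 by norm_num)
  interval_cases m
  · have hcos : Real.cos (Real.pi / (2 : ℕ)) = 0 := by simp
    rw [hcos] at hle hge
    rw [if_pos (by norm_num)]
    linarith
  · have hcos : Real.cos (Real.pi / (3 : ℕ)) = 1 / 2 := by simp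
    rw [hcos] at hle hge
    have : ¬ (3 * l ≤ k) := fun h => by linarith [h₃'.mpr h]
    have : 2 * l ≤ k := h₂'.mp (by linarith)
    rw [if_pos le_rfl]
    exact le_antisymm (h₂.mpr (by omega)) (by linarith)
  · have hcos : Real.cos (Real.pi / (4 : ℕ)) = √2 / 2 := by simp
    rw [hcos] at hle hge
    have : ¬ (k ≤ 2 * l) := fun h => by nlinarith [h₂.mpr h]
    have : k ≤ 3 * l := h₃.mp (by linarith)
    rw [if_neg (by norm_num)]
    exact le_antisymm (by linarith) (h₃'.mpr (by omega))
  · rw [cos_pi_div_five_eq_tau_div_two, tau] at hle hge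
    have hsqrt5 := Real.sq_sqrt (show (0 : ℝ) ≤ 5 by norm_num)
    have hsqrt5_lt : √5 < 9 / 4 := (Real.sqrt_lt' (by norm_num)).mpr (by norm_num)
    have hsqrt2_gt : 7 / 5 < √2 := Real.lt_sqrt_of_sq_lt (by norm_num)
    have : ¬ (4 * l ≤ k) := fun h => by linarith [h₄.mpr h]
    have : 3 * l ≤ k := h₃'.mp (by linarith)
    rw [if_neg (by norm_num)]
    exact le_antisymm (h₃.mpr (by omega)) (by linarith)

theorem IsSeparated.exists_re_mul_eq (hH : IsSeparated H m) (hm : 0 < m) (hneg : -1 ∈ H)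
    {a b : UnitQuat} (ha : a ∈ H) (hb : b ∈ H) (ha_re : a.1.re = Real.cos (Real.pi / m))
    (hb_re : b.1.re = Real.cos (Real.pi / m)) (hab : ¬Commute a b) :
    ∃ c ∈ H, c.1.re = Real.cos (Real.pi / m) ∧
      (a * c).1.re = if m ≤ 3 then 0 else 1 / 2 := by
  obtain ⟨h2m, hm5⟩ := hH.two_le_and_le_five hm ha hb ha_re hb_re hab
  have hsum := re_mul_add_re_mul_inv a b
  rw [ha_re, hb_re] at hsum
  have hinv_re : (b⁻¹).1.re = Real.cos (Real.pi / m) := by simp [hb_re]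
  have h₁ : (a * b).1.re ≤ Real.cos (Real.pi / m) := hH _ (H.mul_mem ha hb) fun h =>
    hab (eq_inv_of_mul_eq_one_left h ▸ (Commute.refl b).inv_left)
  have h₂ : (a * b⁻¹).1.re ≤ Real.cos (Real.pi / m) := hH _ (H.mul_mem ha (H.inv_mem hb)) fun h =>
    hab (mul_inv_eq_one.mp h ▸ Commute.refl a)
  rcases le_total (a * b).1.re (Real.cos (Real.pi / m) ^ 2) with hle | hle
  · exact ⟨b, hb, hb_re, hH.re_eq_zero_or_half h2m hm5 hneg (H.mul_mem ha hb) hle (by linarith)⟩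
  · exact ⟨b⁻¹, H.inv_mem hb, hinv_re, hH.re_eq_zero_or_half h2m hm5 hneg
      (H.mul_mem ha (H.inv_mem hb)) (by linarith) (by linarith)⟩

end NonCommutingPair

section VoronoiCell

/-- The Dirichlet–Voronoi cell of `1` for the action of `K` on `S³` by right multiplication: the
unit quaternions at least as close to `1` as to any other element of `K`. -/
def voronoiCell (K : Subgroup UnitQuat) : Set UnitQuat :=
  {q | ∀ k ∈ K, (q * k).1.re ≤ q.1.re}

variable {H K : Subgroup UnitQuat} {q : UnitQuat}

lemma conj_mem_voronoiCell {v : UnitQuat} (hv : v ∈ K) (hq : q ∈ voronoiCell K) :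
    v * q * v⁻¹ ∈ voronoiCell K := fun k hk => by
  have hmul : v * q * v⁻¹ * k = v * (q * (v⁻¹ * k * v)) * v⁻¹ := by group
  rw [hmul, re_conj, re_conj]
  exact hq _ (K.mul_mem (K.mul_mem (K.inv_mem hv) hk) hv)

-- The cell lies on one side of the walls attached to `k` and to `k⁻¹`.
lemma abs_inner_im_le_of_mem_voronoiCell (hq : q ∈ voronoiCell K) {k : UnitQuat} (hk : k ∈ K) :
    |q.1.imI * k.1.imI + q.1.imJ * k.1.imJ + q.1.imK * k.1.imK| ≤ (1 - k.1.re) * q.1.re := by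
  have h₁ := hq k hk
  have h₂ := hq k⁻¹ (K.inv_mem hk)
  simp only [Metric.unitSphere.coe_mul, Metric.unitSphere.coe_inv, inv_coe_eq_star, re_mul, re_star,
    imI_star, imJ_star, imK_star] at h₁ h₂
  rw [abs_le]
  constructor <;> linarith

lemma one_le_of_abs_im_le {c : ℝ} (hI : |q.1.imI| ≤ c * q.1.re) (hJ : |q.1.imJ| ≤ c * q.1.re)
    (hK : |q.1.imK| ≤ c * q.1.re) : 1 ≤ (1 + 3 * c ^ 2) * q.1.re ^ 2 := by
  have hI' := sq_le_sq.mpr (hI.trans (le_abs_self _))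
  have hJ' := sq_le_sq.mpr (hJ.trans (le_abs_self _))
  have hK' := sq_le_sq.mpr (hK.trans (le_abs_self _))
  linarith [sum_sq_coords q]

theorem eq_of_forall_mem_voronoiCell [Finite H] (hKH : K ≤ H) {t : ℝ}
    (hH : ∀ x ∈ H, x ≠ 1 → x.1.re ≤ t) (hcell : ∀ q ∈ voronoiCell K, t < q.1.re) : H = K := by
  refine le_antisymm (fun x hx => ?_) hKH
  have hfin : (K : Set UnitQuat).Finite := (Set.toFinite (H : Set UnitQuat)).subset hKH
  obtain ⟨k, hk, hmax⟩ :=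
    Set.exists_max_image (K : Set UnitQuat) (fun k => (x * k).1.re) hfin ⟨1, K.one_mem⟩
  have hlt : t < (x * k).1.re := hcell _ fun k' hk' => by
    rw [mul_assoc]
    exact hmax _ (K.mul_mem hk hk')
  have hxk : x * k = 1 := by
    by_contra hne
    exact (hH _ (H.mul_mem hx (hKH hk)) hne).not_gt hlt
  exact eq_inv_of_mul_eq_one_left hxk ▸ K.inv_mem hk

instance finite_conj_smul [Finite H] (u : UnitQuat) : Finite ↥(MulAut.conj u • H) :=
  .of_equiv _ (H.equivSMul (MulAut.conj u)).toEquiv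

theorem exists_conj_smul_eq [Finite H] {t : ℝ} (hH : ∀ x ∈ H, x ≠ 1 → x.1.re ≤ t)
    (hcell : ∀ q ∈ voronoiCell K, t < q.1.re) {a b p q : UnitQuat}
    (hK : K ≤ Subgroup.closure {p, q}) (ha : a ∈ H) (hb : b ∈ H) (hap : a.1.re = p.1.re)
    (hbq : b.1.re = q.1.re) (hab : (a * b).1.re = (p * q).1.re) (hp : p.1.re ^ 2 < 1) :
    ∃ u : UnitQuat, MulAut.conj u • H = K := by
  obtain ⟨u, hua, hub⟩ := exists_conj_eq_and_conj_eq hap hbq hab (hap ▸ hp)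
  refine ⟨u, eq_of_forall_mem_voronoiCell (hK.trans ?_) ?_ hcell⟩
  · rw [Subgroup.closure_le, Set.insert_subset_iff, Set.singleton_subset_iff, ← hua, ← hub]
    exact ⟨Subgroup.smul_mem_pointwise_smul a (MulAut.conj u) H ha,
      Subgroup.smul_mem_pointwise_smul b (MulAut.conj u) H hb⟩
  · rintro - ⟨x, hx, rfl⟩ hne
    exact (re_conj u x).trans_le (hH x hx fun h => hne (h ▸ map_one (MulAut.conj u)))

end VoronoiCell

section Generators

/-- The unit quaternion `i`. -/
def i : UnitQuat := ofCoords 0 1 0 0 (by norm_num)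

/-- The unit quaternion `j`. -/
def j : UnitQuat := ofCoords 0 0 1 0 (by norm_num)

/-- The element `(1 + i + j + k)/2` of order `6` of the binary tetrahedral group. -/
noncomputable def ω : UnitQuat := ofCoords (1 / 2) (1 / 2) (1 / 2) (1 / 2) (by norm_num)

/-- The element `(√2/2)(1 + j)` of order `8` of the binary octahedral group. -/
noncomputable def σ : UnitQuat := ofCoords (√2 / 2) 0 (√2 / 2) 0 (by
  linear_combination Real.sq_sqrt (zero_le_two (α := ℝ)) / 2)

lemma tau_sq : tau ^ 2 = tau + 1 := Real.goldenRatio_sq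

lemma tau_inv : tau⁻¹ = tau - 1 := inv_eq_of_mul_eq_one_right (by linear_combination tau_sq)

/-- The element `(τ⁻¹ + τ j + k)/2` of the binary icosahedral group. -/
noncomputable def ι : UnitQuat := ofCoords (tau⁻¹ / 2) 0 (tau / 2) (1 / 2) (by
  rw [tau_inv]
  linear_combination tau_sq / 2)

variable {K : Subgroup UnitQuat}

lemma binTetQ_eq_closure : BinTetQ = Subgroup.closure {i, j, ω} := by
  refine congrArg _ (Set.ext fun x => ?_)
  simp only [Set.mem_insert_iff, Set.mem_singleton_iff, Subtype.ext_iff]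
  rfl

lemma binTetQ_le_iff : BinTetQ ≤ K ↔ i ∈ K ∧ j ∈ K ∧ ω ∈ K := by
  rw [binTetQ_eq_closure, Subgroup.closure_le, Set.insert_subset_iff, Set.insert_subset_iff,
    Set.singleton_subset_iff]
  rfl

lemma binOctQ_le_iff : BinOctQ ≤ K ↔ BinTetQ ≤ K ∧ σ ∈ K := by
  have hset : {x : UnitQuat | (x : ℍ[ℝ]) = sigmaQ} = {σ} :=
    Set.ext fun x => (Subtype.ext_iff (a2 := σ)).symm
  rw [BinOctQ, hset, Subgroup.closure_le, Set.union_subset_iff, Set.singleton_subset_iff]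
  rfl

lemma binIcoQ_le_iff : BinIcoQ ≤ K ↔ BinTetQ ≤ K ∧ ι ∈ K := by
  have hset : {x : UnitQuat | (x : ℍ[ℝ]) = iotaQ} = {ι} :=
    Set.ext fun x => (Subtype.ext_iff (a2 := ι)).symm
  rw [BinIcoQ, hset, Subgroup.closure_le, Set.union_subset_iff, Set.singleton_subset_iff]
  rfl

lemma binDihQ_eq_sup (n : ℕ) : BinDihQ n = CyclicQ (2 * n) ⊔ Subgroup.zpowers j := by
  rw [Subgroup.zpowers_eq_closure, CyclicQ, ← Subgroup.closure_union, BinDihQ]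
  congr 1
  ext x
  exact or_congr_right (Subtype.ext_iff (a2 := j)).symm

lemma binDihQ_two_eq_closure : BinDihQ 2 = Subgroup.closure {i, j} := by
  have hangle : 2 * Real.pi / ((2 * 2 : ℕ) : ℝ) = Real.pi / 2 := by
    push_cast
    ring
  have hi : expI (2 * Real.pi / ((2 * 2 : ℕ) : ℝ)) = i := by
    rw [hangle]
    apply UnitQuat.ext <;> simp [i]
  rw [binDihQ_eq_sup, cyclicQ_eq_zpowers, hi, Subgroup.zpowers_eq_closure,
    Subgroup.zpowers_eq_closure, ← Subgroup.closure_union, Set.singleton_union]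

/-- The groups of the classification: cyclic, binary dihedral, binary tetrahedral, binary
octahedral and binary icosahedral. -/
def IsStandard (K : Subgroup UnitQuat) : Prop :=
  (∃ n, 1 ≤ n ∧ K = CyclicQ n) ∨ (∃ n, 2 ≤ n ∧ K = BinDihQ n) ∨
    K = BinTetQ ∨ K = BinOctQ ∨ K = BinIcoQ

end Generators

section PolyhedralGroups

variable {H K : Subgroup UnitQuat} {q : UnitQuat}

lemma one_le_of_mem_voronoiCell_of_omega {c : ℝ} (hω : ω ∈ K)
    (hJ : ∀ q ∈ voronoiCell K, |q.1.imJ| ≤ c * q.1.re) (hq : q ∈ voronoiCell K) :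
    1 ≤ (1 + 3 * c ^ 2) * q.1.re ^ 2 := by
  have hI := hJ _ (conj_mem_voronoiCell hω hq)
  have hK := hJ _ (conj_mem_voronoiCell (K.inv_mem hω) hq)
  rw [re_conj] at hI hK
  refine one_le_of_abs_im_le (le_of_eq_of_le (congrArg _ ?_) hI) (hJ q hq)
    (le_of_eq_of_le (congrArg _ ?_) hK) <;> simp [ω] <;> ring

lemma re_nonneg_of_mem_voronoiCell (hi : i ∈ K) (hq : q ∈ voronoiCell K) : 0 ≤ q.1.re := by
  have hle : |q.1.imI| ≤ q.1.re := by simpa [i] using abs_inner_im_le_of_mem_voronoiCell hq hi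
  exact (abs_nonneg _).trans hle

lemma re_pos_of_mem_voronoiCell_binDihQ_two (hq : q ∈ voronoiCell (BinDihQ 2)) : 0 < q.1.re := by
  rw [binDihQ_two_eq_closure] at hq
  have hi : i ∈ Subgroup.closure {i, j} := Subgroup.subset_closure (Set.mem_insert i {j})
  have hj : j ∈ Subgroup.closure {i, j} := Subgroup.subset_closure (Set.mem_insert_of_mem i rfl)
  have hle : 1 ≤ (1 + 3 * 1 ^ 2) * q.1.re ^ 2 := by
    apply one_le_of_abs_im_le
    · simpa [i] using abs_inner_im_le_of_mem_voronoiCell hq hi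
    · simpa [j] using abs_inner_im_le_of_mem_voronoiCell hq hj
    · simpa [i, j] using abs_inner_im_le_of_mem_voronoiCell hq (mul_mem hi hj)
  have h0 := re_nonneg_of_mem_voronoiCell hi hq
  nlinarith

lemma half_lt_re_of_mem_voronoiCell_binTetQ (hq : q ∈ voronoiCell BinTetQ) : 1 / 2 < q.1.re := by
  obtain ⟨hi, hj, hω⟩ := binTetQ_le_iff.mp le_rfl
  have h₀ := abs_inner_im_le_of_mem_voronoiCell hq hω
  have h₁ := abs_inner_im_le_of_mem_voronoiCell hq (mul_mem (inv_mem hω) hi)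
  have h₂ := abs_inner_im_le_of_mem_voronoiCell hq (mul_mem (inv_mem hω) hj)
  have h₃ := abs_inner_im_le_of_mem_voronoiCell hq (mul_mem (inv_mem hω) (mul_mem hi hj))
  simp only [ω, i, j, Metric.unitSphere.coe_mul, Metric.unitSphere.coe_inv, inv_coe_eq_star, re_mul,
    imI_mul, imJ_mul, imK_mul, re_star, imI_star, imJ_star, imK_star, re_ofCoords, imI_ofCoords,
    imJ_ofCoords, imK_ofCoords] at h₀ h₁ h₂ h₃
  have h0 := re_nonneg_of_mem_voronoiCell hi hq
  have hsq := sum_sq_coords q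
  have hq₀ := sq_le_sq.mpr (h₀.trans (le_abs_self _))
  have hq₁ := sq_le_sq.mpr (h₁.trans (le_abs_self _))
  have hq₂ := sq_le_sq.mpr (h₂.trans (le_abs_self _))
  have hq₃ := sq_le_sq.mpr (h₃.trans (le_abs_self _))
  nlinarith

lemma sqrt_two_div_two_lt_re_of_mem_voronoiCell_binOctQ (hq : q ∈ voronoiCell BinOctQ) :
    √2 / 2 < q.1.re := by
  obtain ⟨hT, hσ⟩ := binOctQ_le_iff.mp le_rfl
  obtain ⟨hi, -, hω⟩ := binTetQ_le_iff.mp hT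
  have hsqrt := Real.sq_sqrt (zero_le_two (α := ℝ))
  have hsqrt_gt : 4 / 3 < √2 := Real.lt_sqrt_of_sq_lt (by norm_num)
  have hle : 1 ≤ (1 + 3 * (√2 - 1) ^ 2) * q.1.re ^ 2 := by
    refine one_le_of_mem_voronoiCell_of_omega hω (fun q hq => ?_) hq
    have hwall : |q.1.imJ| * (√2 / 2) ≤ (1 - √2 / 2) * q.1.re := by
      simpa [σ, abs_of_pos] using abs_inner_im_le_of_mem_voronoiCell hq hσ
    calc |q.1.imJ| = √2 * (|q.1.imJ| * (√2 / 2)) := by linear_combination -|q.1.imJ| / 2 * hsqrt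
      _ ≤ √2 * ((1 - √2 / 2) * q.1.re) := by gcongr
      _ = (√2 - 1) * q.1.re := by linear_combination -q.1.re / 2 * hsqrt
  have hlt : (1 + 3 * (√2 - 1) ^ 2) * (√2 / 2) ^ 2 < 1 := by nlinarith
  exact lt_of_pow_lt_pow_left₀ 2 (re_nonneg_of_mem_voronoiCell hi hq)
    (lt_of_mul_lt_mul_left (hlt.trans_le hle) (by positivity))

lemma tau_div_two_lt_re_of_mem_voronoiCell_binIcoQ (hq : q ∈ voronoiCell BinIcoQ) :
    tau / 2 < q.1.re := by
  obtain ⟨hT, hι⟩ := binIcoQ_le_iff.mp le_rfl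
  obtain ⟨hi, hj, hω⟩ := binTetQ_le_iff.mp hT
  have hsq := tau_sq
  have htau : 1 < tau := Real.one_lt_goldenRatio
  have hle : 1 ≤ (1 + 3 * (2 - tau) ^ 2) * q.1.re ^ 2 := by
    refine one_le_of_mem_voronoiCell_of_omega hω (fun q hq => ?_) hq
    have h₁ := abs_inner_im_le_of_mem_voronoiCell hq (mul_mem (mul_mem (inv_mem hj) hι) hω)
    have h₂ := abs_inner_im_le_of_mem_voronoiCell hq (mul_mem (mul_mem hι hω) (inv_mem hj))
    simp only [ι, ω, j, tau_inv, Metric.unitSphere.coe_mul, Metric.unitSphere.coe_inv,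
      inv_coe_eq_star, re_mul, imI_mul, imJ_mul, imK_mul, re_star, imI_star, imJ_star, imK_star,
      re_ofCoords, imI_ofCoords, imJ_ofCoords, imK_ofCoords] at h₁ h₂
    rw [abs_le] at h₁ h₂ ⊢
    constructor <;> linarith
  have hlt : (1 + 3 * (2 - tau) ^ 2) * (tau / 2) ^ 2 < 1 := by nlinarith
  exact lt_of_pow_lt_pow_left₀ 2 (re_nonneg_of_mem_voronoiCell hi hq)
    (lt_of_mul_lt_mul_left (hlt.trans_le hle) (by positivity))

lemma inv_omega_mul_j_mul_omega : ω⁻¹ * j * ω = i := by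
  apply UnitQuat.ext <;> norm_num [i, j, ω]

lemma sigma_mul_sigma : σ * σ = j := by
  have hsqrt := Real.sq_sqrt (zero_le_two (α := ℝ))
  apply UnitQuat.ext <;> simp [σ, j]
  linear_combination hsqrt / 2

lemma icoGenerator_mul_icoGenerator : j⁻¹ * ι * ω * (j⁻¹ * ι * ω) = ι := by
  apply UnitQuat.ext <;> simp [ι, ω, j, tau_inv] <;> linarith [tau_sq]

lemma binTetQ_le_of_mem (hj : j ∈ K) (hω : ω ∈ K) : BinTetQ ≤ K :=
  binTetQ_le_iff.mpr
    ⟨inv_omega_mul_j_mul_omega ▸ mul_mem (mul_mem (inv_mem hω) hj) hω, hj, hω⟩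

lemma binTetQ_le_closure : BinTetQ ≤ Subgroup.closure {ω, ω⁻¹ * j} := by
  have hω : ω ∈ Subgroup.closure {ω, ω⁻¹ * j} := Subgroup.subset_closure (.inl rfl)
  have hq : ω⁻¹ * j ∈ Subgroup.closure {ω, ω⁻¹ * j} := Subgroup.subset_closure (.inr rfl)
  exact binTetQ_le_of_mem ((Subgroup.mul_mem_cancel_left _ (inv_mem hω)).mp hq) hω

lemma binOctQ_le_closure : BinOctQ ≤ Subgroup.closure {ω * σ⁻¹, σ} := by
  have hp : ω * σ⁻¹ ∈ Subgroup.closure {ω * σ⁻¹, σ} := Subgroup.subset_closure (.inl rfl)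
  have hσ : σ ∈ Subgroup.closure {ω * σ⁻¹, σ} := Subgroup.subset_closure (.inr rfl)
  exact binOctQ_le_iff.mpr ⟨binTetQ_le_of_mem (sigma_mul_sigma ▸ mul_mem hσ hσ)
    ((Subgroup.mul_mem_cancel_right _ (inv_mem hσ)).mp hp), hσ⟩

lemma binIcoQ_le_closure : BinIcoQ ≤ Subgroup.closure {ι⁻¹ * j, j⁻¹ * ι * ω} := by
  set K := Subgroup.closure {ι⁻¹ * j, j⁻¹ * ι * ω}
  have hp : ι⁻¹ * j ∈ K := Subgroup.subset_closure (.inl rfl)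
  have hq : j⁻¹ * ι * ω ∈ K := Subgroup.subset_closure (.inr rfl)
  have hω : ω ∈ K := by simpa [mul_assoc] using mul_mem hp hq
  have hι : ι ∈ K := icoGenerator_mul_icoGenerator ▸ mul_mem hq hq
  have hj : j ∈ K := (Subgroup.mul_mem_cancel_left _ (inv_mem hι)).mp hp
  exact binIcoQ_le_iff.mpr ⟨binTetQ_le_of_mem hj hω, hι⟩

lemma exists_conj_smul_eq_binDihQ_two [Finite H] (hH : IsSeparated H 2) {a b : UnitQuat}
    (ha : a ∈ H) (hb : b ∈ H) (ha_re : a.1.re = 0) (hb_re : b.1.re = 0)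
    (hab : (a * b).1.re = 0) : ∃ u : UnitQuat, MulAut.conj u • H = BinDihQ 2 :=
  exists_conj_smul_eq (hH := hH) (hcell := fun q hq => by
      simpa using re_pos_of_mem_voronoiCell_binDihQ_two hq)
    binDihQ_two_eq_closure.le ha hb ha_re hb_re (hab.trans (by simp [i, j])) (by simp [i])

lemma exists_conj_smul_eq_binTetQ [Finite H] (hH : IsSeparated H 3) {a b : UnitQuat}
    (ha : a ∈ H) (hb : b ∈ H) (ha_re : a.1.re = 1 / 2) (hb_re : b.1.re = 1 / 2)
    (hab : (a * b).1.re = 0) : ∃ u : UnitQuat, MulAut.conj u • H = BinTetQ :=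
  exists_conj_smul_eq (hH := hH) (hcell := fun q hq => by
      simpa using half_lt_re_of_mem_voronoiCell_binTetQ hq)
    binTetQ_le_closure ha hb ha_re (by simp [hb_re, ω, j])
    (by rw [hab, mul_inv_cancel_left]; rfl) (by norm_num [ω])

lemma exists_conj_smul_eq_binOctQ [Finite H] (hH : IsSeparated H 4) {a b : UnitQuat}
    (ha : a ∈ H) (hb : b ∈ H) (ha_re : a.1.re = √2 / 2) (hb_re : b.1.re = √2 / 2)
    (hab : (a * b).1.re = 1 / 2) : ∃ u : UnitQuat, MulAut.conj u • H = BinOctQ := by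
  have hp : (ω * σ⁻¹).1.re = √2 / 2 := by
    simp [ω, σ]
    ring
  refine exists_conj_smul_eq (hH := hH) (hcell := fun q hq => by
      simpa using sqrt_two_div_two_lt_re_of_mem_voronoiCell_binOctQ hq)
    binOctQ_le_closure ha hb (ha_re.trans hp.symm) hb_re ?_ ?_
  · rw [hab, inv_mul_cancel_right]
    rfl
  · rw [hp]
    norm_num [div_pow]

lemma exists_conj_smul_eq_binIcoQ [Finite H] (hH : IsSeparated H 5) {a b : UnitQuat}
    (ha : a ∈ H) (hb : b ∈ H) (ha_re : a.1.re = tau / 2) (hb_re : b.1.re = tau / 2)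
    (hab : (a * b).1.re = 1 / 2) : ∃ u : UnitQuat, MulAut.conj u • H = BinIcoQ := by
  have hp : (ι⁻¹ * j).1.re = tau / 2 := by simp [ι, j]
  have hq : (j⁻¹ * ι * ω).1.re = tau / 2 := by
    simp [ι, ω, j, tau_inv]
    ring
  refine exists_conj_smul_eq (hH := hH) (hcell := fun q hq => ?_)
    binIcoQ_le_closure ha hb (ha_re.trans hp.symm) (hb_re.trans hq.symm) ?_ ?_
  · rw [cos_pi_div_five_eq_tau_div_two]
    exact tau_div_two_lt_re_of_mem_voronoiCell_binIcoQ hq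
  · rw [hab, mul_assoc j⁻¹, mul_assoc ι⁻¹, mul_inv_cancel_left, inv_mul_cancel_left]
    rfl
  · rw [hp]
    have htau : tau < 2 := Real.goldenRatio_lt_two
    linarith [tau_sq]

theorem exists_isStandard_conj_smul_of_not_commute [Finite H] {m : ℕ} (hm : 0 < m)
    (hneg : -1 ∈ H) (hH : IsSeparated H m) {a b : UnitQuat} (ha : a ∈ H) (hb : b ∈ H)
    (ha_re : a.1.re = Real.cos (Real.pi / m)) (hb_re : b.1.re = Real.cos (Real.pi / m))
    (hab : ¬Commute a b) : ∃ u : UnitQuat, IsStandard (MulAut.conj u • H) := by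
  obtain ⟨h2m, hm5⟩ := hH.two_le_and_le_five hm ha hb ha_re hb_re hab
  obtain ⟨c, hc, hc_re, hac⟩ := hH.exists_re_mul_eq hm hneg ha hb ha_re hb_re hab
  interval_cases m
  · obtain ⟨u, hu⟩ := exists_conj_smul_eq_binDihQ_two hH ha hc (by simpa using ha_re)
      (by simpa using hc_re) (by simpa using hac)
    exact ⟨u, .inr (.inl ⟨2, le_rfl, hu⟩)⟩
  · obtain ⟨u, hu⟩ := exists_conj_smul_eq_binTetQ hH ha hc (by simpa using ha_re)
      (by simpa using hc_re) (by simpa using hac)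
    exact ⟨u, .inr (.inr (.inl hu))⟩
  · obtain ⟨u, hu⟩ := exists_conj_smul_eq_binOctQ hH ha hc (by simpa using ha_re)
      (by simpa using hc_re) (by simpa using hac)
    exact ⟨u, .inr (.inr (.inr (.inl hu)))⟩
  · rw [cos_pi_div_five_eq_tau_div_two] at ha_re hc_re
    obtain ⟨u, hu⟩ := exists_conj_smul_eq_binIcoQ hH ha hc ha_re hc_re (by simpa using hac)
    exact ⟨u, .inr (.inr (.inr (.inr hu)))⟩

end PolyhedralGroups

section CommutingConjugates

variable {H : Subgroup UnitQuat} {a b : UnitQuat}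

lemma isStandard_of_le_complexUnits [Finite H] (hH : H ≤ complexUnits) : IsStandard H :=
  .inl ⟨Nat.card H, Nat.card_pos, eq_cyclicQ_of_le_complexUnits hH⟩

lemma neg_one_mem_conj_smul (hneg : -1 ∈ H) (u : UnitQuat) : -1 ∈ MulAut.conj u • H :=
  ⟨-1, hneg, (Commute.neg_one_right u).mul_inv_cancel⟩

lemma mem_complexUnits_or_of_conj_mem {h : UnitQuat} (ha : a ∈ complexUnits)
    (hne : a.1.re ^ 2 < 1) (hconj : h * a * h⁻¹ ∈ complexUnits) :
    h ∈ complexUnits ∨ h.1.re = 0 ∧ h.1.imI = 0 := by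
  have hI := imI_ne_zero_of_mem_complexUnits ha hne
  obtain ⟨hJ, hK⟩ := hconj
  simp only [Metric.unitSphere.coe_mul, Metric.unitSphere.coe_inv, inv_coe_eq_star, re_mul, imI_mul,
    imJ_mul, imK_mul, re_star, imI_star, imJ_star, imK_star, ha.1, ha.2] at hJ hK
  have hJ' : h.1.imI * h.1.imJ + h.1.re * h.1.imK = 0 := mul_left_cancel₀ hI (by linarith)
  have hK' : h.1.imI * h.1.imK - h.1.re * h.1.imJ = 0 := mul_left_cancel₀ hI (by linarith)
  have hprod : (h.1.re ^ 2 + h.1.imI ^ 2) * (h.1.imJ ^ 2 + h.1.imK ^ 2) = 0 := by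
    linear_combination (h.1.imI * h.1.imJ + h.1.re * h.1.imK) * hJ' +
      (h.1.imI * h.1.imK - h.1.re * h.1.imJ) * hK'
  rcases mul_eq_zero.mp hprod with h0 | h0
  · exact .inr ⟨by nlinarith, by nlinarith⟩
  · exact .inl ⟨by nlinarith, by nlinarith⟩

lemma mul_inv_j_mem_complexUnits {h : UnitQuat} (hre : h.1.re = 0) (hI : h.1.imI = 0) :
    h * j⁻¹ ∈ complexUnits := by
  constructor <;> simp [j, hre, hI]

lemma IsNormalPair.eq_j (hab : IsNormalPair a b) (hre : b.1.re = 0) (hI : b.1.imI = 0) :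
    b = j := by
  have hsq := sum_sq_coords b
  rw [hre, hI, hab.imK_eq_zero] at hsq
  refine UnitQuat.ext hre hI ?_ hab.imK_eq_zero
  exact (pow_eq_one_iff_of_nonneg hab.imJ_nonneg two_ne_zero).mp (by linarith)

lemma exists_inf_complexUnits_eq_cyclicQ [Finite H] (hneg : -1 ∈ H) (ha : a ∈ H)
    (haC : a ∈ complexUnits) (hne : a.1.re ^ 2 < 1) :
    ∃ n, 2 ≤ n ∧ H ⊓ complexUnits = CyclicQ (2 * n) := by
  have : Finite ↥(H ⊓ complexUnits) :=
    Set.Finite.subset (Set.toFinite (H : Set UnitQuat)) inf_le_left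
  have hneg' : -1 ∈ H ⊓ complexUnits := ⟨hneg, by constructor <;> simp⟩
  have horder : orderOf (-1 : UnitQuat) = 2 := orderOf_eq_prime neg_one_sq neg_one_ne_one
  obtain ⟨n, hn⟩ := horder ▸ Subgroup.orderOf_dvd_natCard _ hneg'
  have hpos : 0 < Nat.card ↥(H ⊓ complexUnits) := Nat.card_pos
  refine ⟨n, ?_, hn ▸ eq_cyclicQ_of_le_complexUnits inf_le_right⟩
  by_contra! hlt
  have hcard : Nat.card ↥(H ⊓ complexUnits) = 2 := by omega
  have hsq : a ^ 2 = 1 := orderOf_dvd_iff_pow_eq_one.mp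
    (hcard ▸ Subgroup.orderOf_dvd_natCard (H ⊓ complexUnits) ⟨ha, haC⟩)
  rcases sq_eq_one_iff.mp (congrArg Subtype.val hsq) with h | h <;> simp [h] at hne

lemma IsNormalPair.exists_eq_binDihQ [Finite H] (hab : IsNormalPair a b) (hneg : -1 ∈ H)
    (ha : a ∈ H) (hb : b ∈ H) (hne : a.1.re ^ 2 < 1) (hnc : ¬Commute a b)
    (hcomm : ∀ h ∈ H, Commute a (h * a * h⁻¹)) : ∃ n, 2 ≤ n ∧ H = BinDihQ n := by
  have hdich : ∀ h ∈ H, h ∈ complexUnits ∨ h.1.re = 0 ∧ h.1.imI = 0 := fun h hh =>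
    mem_complexUnits_or_of_conj_mem hab.mem_complexUnits hne
      (mem_complexUnits_of_commute hab.mem_complexUnits hne (hcomm h hh))
  have hj : j ∈ H := by
    rcases hdich b hb with hbC | ⟨hre, hI⟩
    · exact absurd (commute_of_mem_complexUnits hab.mem_complexUnits hbC) hnc
    · exact hab.eq_j hre hI ▸ hb
  obtain ⟨n, hn, hC⟩ := exists_inf_complexUnits_eq_cyclicQ hneg ha hab.mem_complexUnits hne
  refine ⟨n, hn, ?_⟩
  rw [binDihQ_eq_sup, ← hC]
  refine le_antisymm (fun h hh => ?_) (sup_le inf_le_left (Subgroup.zpowers_le.mpr hj))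
  rcases hdich h hh with hhC | ⟨hre, hI⟩
  · exact Subgroup.mem_sup_left ⟨hh, hhC⟩
  · rw [← inv_mul_cancel_right h j]
    exact Subgroup.mul_mem_sup ⟨H.mul_mem hh (H.inv_mem hj), mul_inv_j_mem_complexUnits hre hI⟩
      (Subgroup.mem_zpowers j)

theorem exists_isStandard_conj_smul_of_forall_commute [Finite H] (hneg : -1 ∈ H) (ha : a ∈ H)
    (hne : a.1.re ^ 2 < 1) (hcomm : ∀ h ∈ H, Commute a (h * a * h⁻¹)) :
    ∃ u : UnitQuat, IsStandard (MulAut.conj u • H) := by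
  by_cases hcentral : ∀ h ∈ H, Commute a h
  · obtain ⟨u, -, hu⟩ := exists_conj_mem_complexUnits a
    refine ⟨u, isStandard_of_le_complexUnits ?_⟩
    rintro - ⟨h, hh, rfl⟩
    exact mem_complexUnits_of_commute hu (by rwa [re_conj]) ((hcentral h hh).map (MulAut.conj u))
  · push Not at hcentral
    obtain ⟨b, hb, hab⟩ := hcentral
    obtain ⟨u, hu⟩ := exists_conj_isNormalPair a b
    refine ⟨u, .inr (.inl (hu.exists_eq_binDihQ (neg_one_mem_conj_smul hneg u)
      (Subgroup.smul_mem_pointwise_smul a (MulAut.conj u) H ha)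
      (Subgroup.smul_mem_pointwise_smul b (MulAut.conj u) H hb) (by rwa [re_conj])
      (fun h => hab ((Commute.conj_iff u).mp h)) ?_))⟩
    rintro - ⟨h, hh, rfl⟩
    have hmap := (hcomm h hh).map (MulAut.conj u)
    rwa [map_mul, map_mul, map_inv] at hmap

end CommutingConjugates

section Classification

variable {G H : Subgroup UnitQuat}

lemma le_complexUnits_of_forall_re_le_neg_one (hH : ∀ x ∈ H, x ≠ 1 → x.1.re ≤ -1) :
    H ≤ complexUnits := fun x hx => by
  by_contra hxC
  have hx1 : x ≠ 1 := fun h => hxC (h ▸ complexUnits.one_mem)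
  have hsq := sum_sq_coords x
  have hre : x.1.re = -1 := le_antisymm (hH x hx hx1) (neg_one_le_re x)
  rw [hre] at hsq
  exact hxC ⟨by nlinarith, by nlinarith⟩

theorem exists_isStandard_conj_smul_of_neg_one_mem [Finite H] (hneg : -1 ∈ H) :
    ∃ u : UnitQuat, IsStandard (MulAut.conj u • H) := by
  obtain ⟨m, hm, ⟨a, ha, ha1, ha_re⟩, hH⟩ := exists_isSeparated_re_eq_cos_pi_div hneg
  by_cases ha_neg : a = -1
  · refine ⟨1, isStandard_of_le_complexUnits ?_⟩
    rw [Subgroup.conj_smul_eq_self_of_mem H.one_mem]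
    refine le_complexUnits_of_forall_re_le_neg_one fun x hx hx1 => (hH x hx hx1).trans_eq ?_
    rw [← ha_re, ha_neg]
    rfl
  by_cases hcomm : ∀ h ∈ H, Commute a (h * a * h⁻¹)
  · exact exists_isStandard_conj_smul_of_forall_commute hneg ha (re_sq_lt_one ha1 ha_neg) hcomm
  · push Not at hcomm
    obtain ⟨h, hh, hab⟩ := hcomm
    exact exists_isStandard_conj_smul_of_not_commute hm hneg hH ha
      (H.mul_mem (H.mul_mem hh ha) (H.inv_mem hh)) ha_re ((re_conj h a).trans ha_re) hab

/-- The subgroup `±G` generated by `G` and `-1`. -/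
def adjoinNegOne (G : Subgroup UnitQuat) : Subgroup UnitQuat where
  carrier := {x | x ∈ G ∨ -x ∈ G}
  mul_mem' := by
    rintro x y (hx | hx) (hy | hy)
    · exact .inl (mul_mem hx hy)
    · exact .inr (mul_neg x y ▸ mul_mem hx hy)
    · exact .inr (neg_mul x y ▸ mul_mem hx hy)
    · exact .inl (neg_mul_neg x y ▸ mul_mem hx hy)
  one_mem' := .inl G.one_mem
  inv_mem' := by
    rintro x (hx | hx)
    · exact .inl (G.inv_mem hx)
    · exact .inr (inv_neg (a := x) ▸ G.inv_mem hx)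

lemma le_adjoinNegOne : G ≤ adjoinNegOne G := fun _ => .inl

lemma neg_one_mem_adjoinNegOne : -1 ∈ adjoinNegOne G :=
  .inr ((neg_neg (1 : UnitQuat)).symm ▸ G.one_mem)

instance finite_adjoinNegOne [Finite G] : Finite (adjoinNegOne G) :=
  have hG : (G : Set UnitQuat).Finite := Set.toFinite _
  (hG.union hG.neg).to_subtype

lemma neg_one_mem_of_mem_adjoinNegOne {x : UnitQuat} (hx : x ∈ adjoinNegOne G)
    (hre : x.1.re = 0) : -1 ∈ G := by
  have hsq := sq_eq_neg_one_of_re_eq_zero hre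
  rcases hx with hx | hx
  · exact hsq ▸ G.pow_mem hx 2
  · exact hsq ▸ neg_sq x ▸ G.pow_mem hx 2

lemma IsStandard.le_complexUnits_or_j_mem {K : Subgroup UnitQuat} (hK : IsStandard K) :
    K ≤ complexUnits ∨ j ∈ K := by
  have hj : j ∈ BinTetQ := (binTetQ_le_iff.mp le_rfl).2.1
  rcases hK with ⟨n, -, rfl⟩ | ⟨n, -, rfl⟩ | rfl | rfl | rfl
  · rw [cyclicQ_eq_zpowers]
    exact .inl (Subgroup.zpowers_le.mpr (expI_mem_complexUnits _))
  · rw [binDihQ_eq_sup]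
    exact .inr (Subgroup.mem_sup_right (Subgroup.mem_zpowers j))
  · exact .inr hj
  · exact .inr ((binOctQ_le_iff.mp le_rfl).1 hj)
  · exact .inr ((binIcoQ_le_iff.mp le_rfl).1 hj)

theorem exists_isStandard_conj_smul_of_neg_one_notMem [Finite G] (hneg : -1 ∉ G) :
    ∃ u : UnitQuat, IsStandard (MulAut.conj u • G) := by
  obtain ⟨u, hu⟩ := exists_isStandard_conj_smul_of_neg_one_mem (neg_one_mem_adjoinNegOne (G := G))
  refine ⟨u, isStandard_of_le_complexUnits ?_⟩
  rcases hu.le_complexUnits_or_j_mem with hC | ⟨x, hx, hxj⟩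
  · exact (Subgroup.pointwise_smul_le_pointwise_smul_iff.mpr le_adjoinNegOne).trans hC
  · refine absurd (neg_one_mem_of_mem_adjoinNegOne hx ?_) hneg
    rw [← re_conj u x]
    exact congrArg (fun q : UnitQuat => q.1.re) hxj

end Classification

end UnitQuat

/-- Every finite subgroup of the group of unit quaternions is conjugate, by some unit
quaternion, to a cyclic group `C_n` (`n ≥ 1`), a binary dihedral group `D*₄ₙ` (`n ≥ 2`),
the binary tetrahedral group `T*`, the binary octahedral group `O*`, or the binary
icosahedral group `I*`. -/
theorem stmt13 (G : Subgroup UnitQuat) (hG : Finite G) :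
    ∃ u : UnitQuat,
      (∃ n : ℕ, 1 ≤ n ∧ Subgroup.map (MulAut.conj u).toMonoidHom G = CyclicQ n) ∨
      (∃ n : ℕ, 2 ≤ n ∧ Subgroup.map (MulAut.conj u).toMonoidHom G = BinDihQ n) ∨
      Subgroup.map (MulAut.conj u).toMonoidHom G = BinTetQ ∨
      Subgroup.map (MulAut.conj u).toMonoidHom G = BinOctQ ∨
      Subgroup.map (MulAut.conj u).toMonoidHom G = BinIcoQ := by
  by_cases hneg : -1 ∈ G
  · exact UnitQuat.exists_isStandard_conj_smul_of_neg_one_mem hneg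
  · exact UnitQuat.exists_isStandard_conj_smul_of_neg_one_notMem hneg
end

section
/- Under the 2-to-1 homomorphism ρ from the unit quaternions to the rotation group of the purely imaginary quaternions, the image ρ(D*₄ₙ) is isomorphic to the dihedral group of order 2n (for n ≥ 2), the image ρ(T*) is isomorphic to the alternating group A₄, the image ρ(O*) is isomorphic to the symmetric group S₄, and the image ρ(I*) is isomorphic to the alternating group A₅; moreover the kernel of the restriction of ρ to each of these four subgroups is {1, −1}, so each is a central extension by a group of order 2 of the dihedral, tetrahedral, octahedral and icosahedral group respectively. -/
open Quaternion
open scoped Quaternion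

/-- The 3-dimensional real subspace `W` of purely imaginary quaternions. -/
def W : Submodule ℝ ℍ[ℝ] where
  carrier := {h : ℍ[ℝ] | h.re = 0}
  add_mem' := by
    intro a b ha hb
    simp only [Set.mem_setOf_eq] at *
    simp [ha, hb]
  zero_mem' := by simp
  smul_mem' := by
    intro c a ha
    simp only [Set.mem_setOf_eq] at *
    simp [ha]

/-!
Each of the four groups acts, through `ρ`, by rotations permuting a configuration of points of `W`:
the vertices of a prism over a regular `n`-gon, the four diagonals of a cube (up to sign) for both
`T*` and `O*`, or the vertices of a dodecahedron, labelled by the ordered pairs of its five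
inscribed cubes. Pairing each generator `q` with the permutation `k` it induces generates a group of
pairs `(q, k)` in which `q` moves the configuration as `k` prescribes. Since the configuration spans
`W` and only `k = 1` leaves it in place, `ρ q = 1` if and only if `k = 1`, so the image of the group
of quaternions under `ρ` is isomorphic to the group of permutations. The kernel of `ρ` is
`{1, -1}` because a unit quaternion that commutes with `i` and `j` is real.
-/

section SignedSymmetry

variable {A G K L X R V : Type*} [Group A] [Group G] [Group K] [Group L]

theorem nonempty_map_mulEquiv_map (B : Subgroup A) (f : A →* L) (g : A →* K)
    (hfg : ∀ a ∈ B, f a = 1 ↔ g a = 1) : Nonempty (B.map f ≃* B.map g) := by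
  have hker : (f.domRestrict B).ker = (g.domRestrict B).ker := by
    ext ⟨a, ha⟩
    exact hfg a ha
  rw [← f.domRestrict_range, ← g.domRestrict_range]
  exact ⟨(QuotientGroup.quotientKerEquivRange _).symm.trans <|
    (QuotientGroup.quotientMulEquivOfEq hker).trans (QuotientGroup.quotientKerEquivRange _)⟩

variable [MulAction K X] [Semiring R] [SeminormedAddCommGroup V] [Module R V]

/-- The pairs `(q, k)` such that the isometry `π q` permutes a family of vectors `w` in the same
way as `k` permutes its index set, up to the sign character `χ`. It serves as the graph of a
correspondence between a group of isometries and a group of permutations. -/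
def signedSymmetryGraph (π : G →* (V ≃ₗᵢ[R] V)) (χ : K →* ℤˣ) (w : X → V) :
    Subgroup (G × K) where
  carrier := {p | ∀ x, π p.1 (w x) = χ p.2 • w (p.2 • x)}
  one_mem' := by simp
  mul_mem' {p p'} hp hp' x := by
    simp only [Prod.fst_mul, Prod.snd_mul, map_mul, LinearIsometryEquiv.coe_mul,
      Function.comp_apply]
    rw [hp' x, Units.smul_def, map_zsmul, hp, ← Units.smul_def, smul_smul, mul_comm, smul_smul]
  inv_mem' {p} hp x := by
    have hx := hp (p.2⁻¹ • x)
    rw [smul_inv_smul] at hx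
    simp only [Prod.fst_inv, Prod.snd_inv, map_inv]
    rw [LinearIsometryEquiv.inv_def, LinearIsometryEquiv.symm_apply_eq, Units.smul_def, map_zsmul,
      hx, ← Units.smul_def, inv_smul_smul]

theorem nonempty_map_closure_mulEquiv_closure {π : G →* (V ≃ₗᵢ[R] V)} {χ : K →* ℤˣ} {w : X → V}
    {S : Set (G × K)} (hS : ∀ p ∈ S, p ∈ signedSymmetryGraph π χ w)
    (hπ : ∀ q, (∀ x, π q (w x) = w x) → π q = 1)
    (hK : ∀ k : K, (∀ x, χ k • w (k • x) = w x) → k = 1) :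
    Nonempty ((Subgroup.closure (Prod.fst '' S)).map π ≃* Subgroup.closure (Prod.snd '' S)) := by
  have hker : ∀ p ∈ Subgroup.closure S, π p.1 = 1 ↔ p.2 = 1 := by
    intro p hp
    have hpw : ∀ x, π p.1 (w x) = χ p.2 • w (p.2 • x) := (Subgroup.closure_le _).2 hS hp
    constructor
    · intro h
      exact hK p.2 fun x => by simpa [h] using (hpw x).symm
    · intro h
      exact hπ p.1 fun x => by simpa [h] using hpw x
  have e := nonempty_map_mulEquiv_map (Subgroup.closure S) (π.comp (MonoidHom.fst G K))
    (MonoidHom.snd G K) hker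
  rwa [← Subgroup.map_map, MonoidHom.map_closure (MonoidHom.fst G K),
    MonoidHom.map_closure (MonoidHom.snd G K)] at e

end SignedSymmetry

section UnitQuaternions

/-- The imaginary quaternion `x i + y j + z k`. -/
def imQuat (x y z : ℝ) : W := ⟨⟨0, x, y, z⟩, rfl⟩

@[simp] theorem re_imQuat (x y z : ℝ) : (imQuat x y z : ℍ[ℝ]).re = 0 := rfl

@[simp] theorem imI_imQuat (x y z : ℝ) : (imQuat x y z : ℍ[ℝ]).imI = x := rfl

@[simp] theorem imJ_imQuat (x y z : ℝ) : (imQuat x y z : ℍ[ℝ]).imJ = y := rfl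

@[simp] theorem imK_imQuat (x y z : ℝ) : (imQuat x y z : ℍ[ℝ]).imK = z := rfl

theorem add_imQuat (x y z x' y' z' : ℝ) :
    imQuat x y z + imQuat x' y' z' = imQuat (x + x') (y + y') (z + z') := by
  ext <;> simp

theorem neg_imQuat (x y z : ℝ) : -imQuat x y z = imQuat (-x) (-y) (-z) := by
  ext <;> simp

theorem smul_imQuat (c x y z : ℝ) : c • imQuat x y z = imQuat (c * x) (c * y) (c * z) := by
  ext <;> simp

theorem imQuat_inj {x y z x' y' z' : ℝ} :
    imQuat x y z = imQuat x' y' z' ↔ x = x' ∧ y = y' ∧ z = z' := by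
  simp only [Subtype.ext_iff, Quaternion.ext_iff, re_imQuat, imI_imQuat, imJ_imQuat, imK_imQuat,
    true_and]

theorem mem_sphere_iff_sum_sq_eq_one {q : ℍ[ℝ]} :
    q ∈ Metric.sphere (0 : ℍ[ℝ]) 1 ↔ q.re ^ 2 + q.imI ^ 2 + q.imJ ^ 2 + q.imK ^ 2 = 1 := by
  rw [mem_sphere_zero_iff_norm, ← Quaternion.normSq_def', Quaternion.normSq_eq_norm_mul_self,
    ← sq, pow_eq_one_iff_of_nonneg (norm_nonneg q) two_ne_zero]

theorem eq_one_or_eq_neg_one_of_commute {q : UnitQuat}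
    (hi : Commute (q : ℍ[ℝ]) (imQuat 1 0 0)) (hj : Commute (q : ℍ[ℝ]) (imQuat 0 1 0)) :
    (q : ℍ[ℝ]) = 1 ∨ (q : ℍ[ℝ]) = -1 := by
  have him : (q : ℍ[ℝ]).imI = 0 ∧ (q : ℍ[ℝ]).imJ = 0 ∧ (q : ℍ[ℝ]).imK = 0 := by
    have hi_coords := Quaternion.ext_iff.1 hi.eq
    have hj_coords := Quaternion.ext_iff.1 hj.eq
    simp only [Quaternion.re_mul, Quaternion.imI_mul, Quaternion.imJ_mul, Quaternion.imK_mul,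
      re_imQuat, imI_imQuat, imJ_imQuat, imK_imQuat] at hi_coords hj_coords
    grind
  obtain ⟨hI, hJ, hK⟩ := him
  have hre : (q : ℍ[ℝ]).re = 1 ∨ (q : ℍ[ℝ]).re = -1 := by
    simpa [hI, hJ, hK] using mem_sphere_iff_sum_sq_eq_one.1 q.2
  exact hre.imp (fun h => by ext <;> simp [*]) fun h => by ext <;> simp [*]

/-- `ρ` is the action of the unit quaternions on `W` by conjugation `h ↦ q h q⁻¹`. -/
structure IsConjugation (ρ : UnitQuat →* (W ≃ₗᵢ[ℝ] W)) : Prop where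
  coe_apply (q : UnitQuat) (h : W) : (ρ q h : ℍ[ℝ]) = (q : ℍ[ℝ]) * (h : ℍ[ℝ]) * (q : ℍ[ℝ])⁻¹

variable {ρ : UnitQuat →* (W ≃ₗᵢ[ℝ] W)}

-- The Euler–Rodrigues formula.
theorem IsConjugation.apply_imQuat (hρ : IsConjugation ρ) (q : UnitQuat) (x y z : ℝ) :
    letI a := (q : ℍ[ℝ]).re
    letI b := (q : ℍ[ℝ]).imI
    letI c := (q : ℍ[ℝ]).imJ
    letI d := (q : ℍ[ℝ]).imK
    ρ q (imQuat x y z) = imQuat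
      ((a ^ 2 + b ^ 2 - c ^ 2 - d ^ 2) * x + 2 * (b * c - a * d) * y + 2 * (b * d + a * c) * z)
      (2 * (b * c + a * d) * x + (a ^ 2 - b ^ 2 + c ^ 2 - d ^ 2) * y + 2 * (c * d - a * b) * z)
      (2 * (b * d - a * c) * x + 2 * (c * d + a * b) * y +
        (a ^ 2 - b ^ 2 - c ^ 2 + d ^ 2) * z) := by
  have hinv : (q : ℍ[ℝ])⁻¹ = star (q : ℍ[ℝ]) := by
    rw [Quaternion.inv_def, Quaternion.normSq_eq_norm_mul_self, norm_eq_of_mem_sphere]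
    simp
  ext <;> rw [hρ.coe_apply, hinv] <;> simp <;> ring

theorem IsConjugation.apply_eq_iff_semiconjBy (hρ : IsConjugation ρ) {q : UnitQuat} {v v' : W} :
    ρ q v = v' ↔ SemiconjBy (q : ℍ[ℝ]) v v' := by
  rw [Subtype.ext_iff, hρ.coe_apply, mul_inv_eq_iff_eq_mul₀ (ne_zero_of_mem_unit_sphere q),
    SemiconjBy]

theorem IsConjugation.map_eq_one_iff (hρ : IsConjugation ρ) {q : UnitQuat} :
    ρ q = 1 ↔ (q : ℍ[ℝ]) = 1 ∨ (q : ℍ[ℝ]) = -1 := by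
  constructor
  · intro h
    refine eq_one_or_eq_neg_one_of_commute ?_ ?_ <;>
    exact hρ.apply_eq_iff_semiconjBy.1 (by simp [h])
  · intro h
    ext v : 1
    refine hρ.apply_eq_iff_semiconjBy.2 ?_
    rcases h with h | h <;> simp [h, SemiconjBy]

theorem IsConjugation.map_eq_one_of_forall_apply_eq (hρ : IsConjugation ρ) {X : Type*} {w : X → W}
    (hi : imQuat 1 0 0 ∈ Submodule.span ℝ (Set.range w))
    (hj : imQuat 0 1 0 ∈ Submodule.span ℝ (Set.range w)) {q : UnitQuat}
    (h : ∀ x, ρ q (w x) = w x) : ρ q = 1 := by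
  have hfix : ∀ v ∈ Submodule.span ℝ (Set.range w), Commute (q : ℍ[ℝ]) v := by
    intro v hv
    refine hρ.apply_eq_iff_semiconjBy.1 ?_
    exact LinearMap.eqOn_span (f := (ρ q).toLinearEquiv.toLinearMap) (g := LinearMap.id)
      (Set.forall_mem_range.2 h) hv
  exact hρ.map_eq_one_iff.2 (eq_one_or_eq_neg_one_of_commute (hfix _ hi) (hfix _ hj))

theorem IsConjugation.nonempty_map_mulEquiv_of_mem_span (hρ : IsConjugation ρ) {K X : Type*}
    [Group K] [MulAction K X] {χ : K →* ℤˣ} {w : X → W} {S : Set (UnitQuat × K)}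
    {B : Subgroup UnitQuat} {H : Subgroup K}
    (hB : Subgroup.closure (Prod.fst '' S) = B) (hH : Subgroup.closure (Prod.snd '' S) = H)
    (hS : ∀ p ∈ S, p ∈ signedSymmetryGraph ρ χ w)
    (hi : imQuat 1 0 0 ∈ Submodule.span ℝ (Set.range w))
    (hj : imQuat 0 1 0 ∈ Submodule.span ℝ (Set.range w))
    (hK : ∀ k : K, (∀ x, χ k • w (k • x) = w x) → k = 1) : Nonempty (B.map ρ ≃* H) := by
  subst hB hH
  exact nonempty_map_closure_mulEquiv_closure hS
    (fun _ => hρ.map_eq_one_of_forall_apply_eq hi hj) hK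

end UnitQuaternions

section Generators

/-- The generator `ζ₂ₙ` of the binary dihedral group, as a unit quaternion. -/
noncomputable def unitZeta (n : ℕ) : UnitQuat :=
  ⟨zetaQ (2 * n), mem_sphere_iff_sum_sq_eq_one.2 (by simp [zetaQ])⟩

/-- The quaternion `i`, as a unit quaternion. -/
def unitI : UnitQuat := ⟨iQ, mem_sphere_iff_sum_sq_eq_one.2 (by simp [iQ])⟩

/-- The quaternion `j`, as a unit quaternion. -/
def unitJ : UnitQuat := ⟨jQ, mem_sphere_iff_sum_sq_eq_one.2 (by simp [jQ])⟩

/-- The generator `ω` of the binary tetrahedral group, as a unit quaternion. -/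
noncomputable def unitOmega : UnitQuat :=
  ⟨omegaQ, mem_sphere_iff_sum_sq_eq_one.2 (by norm_num [omegaQ])⟩

/-- The octahedral generator `(√2/2)(1 + j)`, as a unit quaternion. -/
noncomputable def unitSigma : UnitQuat :=
  ⟨sigmaQ, mem_sphere_iff_sum_sq_eq_one.2 (by norm_num [sigmaQ, div_pow])⟩

theorem tau_sq : tau ^ 2 = tau + 1 := Real.goldenRatio_sq

theorem one_lt_tau : 1 < tau := Real.one_lt_goldenRatio

theorem tau_lt_two : tau < 2 := Real.goldenRatio_lt_two

theorem inv_tau : tau⁻¹ = tau - 1 :=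
  inv_eq_of_mul_eq_one_right (by linear_combination tau_sq)

/-- The icosahedral generator `(τ⁻¹ + τ j + k)/2`, as a unit quaternion. -/
noncomputable def unitIota : UnitQuat :=
  ⟨iotaQ, mem_sphere_iff_sum_sq_eq_one.2 (by
    simp only [iotaQ, inv_tau]
    linear_combination tau_sq / 2)⟩

theorem binDihQ_eq_closure (n : ℕ) : BinDihQ n = Subgroup.closure {unitZeta n, unitJ} := by
  rw [BinDihQ]
  congr 1
  ext q
  simp [Subtype.ext_iff, unitZeta, unitJ]

theorem binTetQ_eq_closure : BinTetQ = Subgroup.closure {unitI, unitJ, unitOmega} := by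
  rw [BinTetQ]
  congr 1
  ext q
  simp [Subtype.ext_iff, unitI, unitJ, unitOmega]

theorem closure_binTetQ_union_singleton (u : UnitQuat) :
    Subgroup.closure ((BinTetQ : Set UnitQuat) ∪ {q | (q : ℍ[ℝ]) = u}) =
      Subgroup.closure {u, unitI, unitJ, unitOmega} := by
  have hu : {q : UnitQuat | (q : ℍ[ℝ]) = u} = {u} := by
    ext q
    simp [Subtype.ext_iff]
  rw [hu, Subgroup.closure_union, Subgroup.closure_eq, binTetQ_eq_closure, ← Subgroup.closure_union,
    Set.union_singleton]

theorem binOctQ_eq_closure : BinOctQ = Subgroup.closure {unitSigma, unitI, unitJ, unitOmega} :=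
  closure_binTetQ_union_singleton unitSigma

theorem binIcoQ_eq_closure : BinIcoQ = Subgroup.closure {unitIota, unitI, unitJ, unitOmega} :=
  closure_binTetQ_union_singleton unitIota

variable {ρ : UnitQuat →* (W ≃ₗᵢ[ℝ] W)}

theorem IsConjugation.apply_unitI (hρ : IsConjugation ρ) (x y z : ℝ) :
    ρ unitI (imQuat x y z) = imQuat x (-y) (-z) := by
  simp [hρ.apply_imQuat, unitI, iQ]

theorem IsConjugation.apply_unitJ (hρ : IsConjugation ρ) (x y z : ℝ) :
    ρ unitJ (imQuat x y z) = imQuat (-x) y (-z) := by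
  simp [hρ.apply_imQuat, unitJ, jQ]

theorem IsConjugation.apply_unitOmega (hρ : IsConjugation ρ) (x y z : ℝ) :
    ρ unitOmega (imQuat x y z) = imQuat z x y := by
  norm_num [hρ.apply_imQuat, unitOmega, omegaQ]

theorem IsConjugation.apply_unitSigma (hρ : IsConjugation ρ) (x y z : ℝ) :
    ρ unitSigma (imQuat x y z) = imQuat z y (-x) := by
  norm_num [hρ.apply_imQuat, unitSigma, sigmaQ, div_pow, div_mul_div_comm]

theorem IsConjugation.apply_unitIota (hρ : IsConjugation ρ) (x y z : ℝ) :
    ρ unitIota (imQuat x y z) =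
      imQuat ((-tau * x - (tau - 1) * y + z) / 2) (((tau - 1) * x + y + tau * z) / 2)
        ((-x + tau * y - (tau - 1) * z) / 2) := by
  simp only [hρ.apply_imQuat, unitIota, iotaQ, inv_tau, imQuat_inj]
  grind [tau_sq]

theorem IsConjugation.apply_unitZeta (hρ : IsConjugation ρ) (n : ℕ) [NeZero n] (x : ℝ) (z : ℂ) :
    ρ (unitZeta n) (imQuat x z.re z.im) =
      imQuat x (ZMod.stdAddChar (1 : ZMod n) * z).re (ZMod.stdAddChar (1 : ZMod n) * z).im := by
  set θ : ℝ := 2 * Real.pi / (2 * n : ℕ) with hθ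
  have hzeta : (unitZeta n : ℍ[ℝ]) = ⟨Real.cos θ, Real.sin θ, 0, 0⟩ := rfl
  have hchar : ZMod.stdAddChar (1 : ZMod n) = Complex.exp ((2 * θ : ℝ) * Complex.I) := by
    have h := ZMod.stdAddChar_coe (N := n) 1
    rw [Int.cast_one] at h
    rw [h, hθ]
    congr 1
    push_cast
    field_simp
  simp only [hρ.apply_imQuat, hzeta, hchar, Complex.mul_re, Complex.mul_im,
    Complex.exp_ofReal_mul_I_re, Complex.exp_ofReal_mul_I_im, Real.cos_two_mul',
    Real.sin_two_mul, imQuat_inj]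
  grind [Real.sin_sq_add_cos_sq θ]

end Generators

section Permutations

open Equiv.Perm

/-- The permutation of the four diagonals of a cube induced by `i`. -/
def diagPermI : Equiv.Perm (Fin 4) := c[0, 1] * c[2, 3]

/-- The permutation of the four diagonals of a cube induced by `j`. -/
def diagPermJ : Equiv.Perm (Fin 4) := c[0, 2] * c[1, 3]

/-- The permutation of the four diagonals of a cube induced by `ω`. -/
def diagPermOmega : Equiv.Perm (Fin 4) := c[1, 2, 3]

/-- The permutation of the four diagonals of a cube induced by `(√2/2)(1 + j)`. -/
def diagPermSigma : Equiv.Perm (Fin 4) := c[0, 3, 2, 1]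

/-- The permutation of the five cubes inscribed in a dodecahedron induced by `i`. -/
def cubePermI : Equiv.Perm (Fin 5) := c[1, 2] * c[3, 4]

/-- The permutation of the five cubes inscribed in a dodecahedron induced by `j`. -/
def cubePermJ : Equiv.Perm (Fin 5) := c[1, 3] * c[2, 4]

/-- The permutation of the five cubes inscribed in a dodecahedron induced by `ω`. -/
def cubePermOmega : Equiv.Perm (Fin 5) := c[2, 3, 4]

/-- The permutation of the five cubes inscribed in a dodecahedron induced by
`(τ⁻¹ + τ j + k)/2`. -/
def cubePermIota : Equiv.Perm (Fin 5) := c[0, 1, 4, 3, 2]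

theorem coe_diagPermI : ⇑diagPermI = ![1, 0, 3, 2] := by decide

theorem coe_diagPermJ : ⇑diagPermJ = ![2, 3, 0, 1] := by decide

theorem coe_diagPermOmega : ⇑diagPermOmega = ![0, 2, 3, 1] := by decide

theorem coe_diagPermSigma : ⇑diagPermSigma = ![3, 0, 1, 2] := by decide

theorem coe_cubePermI : ⇑cubePermI = ![0, 2, 1, 4, 3] := by decide

theorem coe_cubePermJ : ⇑cubePermJ = ![0, 3, 4, 1, 2] := by decide

theorem coe_cubePermOmega : ⇑cubePermOmega = ![0, 1, 3, 4, 2] := by decide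

theorem coe_cubePermIota : ⇑cubePermIota = ![1, 4, 0, 2, 3] := by decide

-- `A₄` is the semidirect product of the Klein four-group and a 3-cycle.
set_option maxRecDepth 100000 in
theorem exists_eq_diagPerm_mul (σ : Equiv.Perm (Fin 4)) (hσ : sign σ = 1) :
    ∃ a b : Fin 2, ∃ c : Fin 3,
      σ = diagPermI ^ (a : ℕ) * diagPermJ ^ (b : ℕ) * diagPermOmega ^ (c : ℕ) := by
  revert σ
  decide

theorem closure_diagPerm_eq_alternatingGroup :
    Subgroup.closure {diagPermI, diagPermJ, diagPermOmega} = alternatingGroup (Fin 4) := by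
  refine le_antisymm ((Subgroup.closure_le _).2 ?_) fun σ hσ => ?_
  · rintro σ (rfl | rfl | rfl) <;> exact mem_alternatingGroup.2 (by decide)
  · obtain ⟨a, b, c, rfl⟩ := exists_eq_diagPerm_mul σ hσ
    refine mul_mem (mul_mem (pow_mem ?_ _) (pow_mem ?_ _)) (pow_mem ?_ _) <;>
      exact Subgroup.subset_closure (by simp)

theorem eq_top_of_alternatingGroup_le {α : Type*} [Fintype α] [DecidableEq α]
    {H : Subgroup (Equiv.Perm α)} (hH : alternatingGroup α ≤ H) {τ : Equiv.Perm α} (hτ : τ ∈ H)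
    (hsign : sign τ = -1) : H = ⊤ := by
  refine (Subgroup.eq_top_iff' H).2 fun σ => ?_
  rcases Int.units_eq_one_or (sign σ) with hσ | hσ
  · exact hH hσ
  · exact (H.mul_mem_cancel_right hτ).1 (hH (by simp [mem_alternatingGroup, hσ, hsign]))

theorem closure_diagPerm_eq_top :
    Subgroup.closure {diagPermSigma, diagPermI, diagPermJ, diagPermOmega} = ⊤ := by
  refine eq_top_of_alternatingGroup_le (τ := diagPermSigma) ?_
    (Subgroup.subset_closure (by simp)) (by decide)
  rw [← closure_diagPerm_eq_alternatingGroup]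
  exact Subgroup.closure_mono (Set.subset_insert _ _)

-- A transitive group of prime degree is primitive, and a primitive group containing a 3-cycle
-- contains the alternating group.
theorem closure_cubePerm_eq_alternatingGroup :
    Subgroup.closure {cubePermIota, cubePermI, cubePermJ, cubePermOmega} =
      alternatingGroup (Fin 5) := by
  refine le_antisymm ((Subgroup.closure_le _).2 ?_) ?_
  · rintro σ (rfl | rfl | rfl | rfl) <;> exact mem_alternatingGroup.2 (by decide)
  · set H := Subgroup.closure {cubePermIota, cubePermI, cubePermJ, cubePermOmega}
    have hIota : cubePermIota ∈ H := Subgroup.subset_closure (by simp)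
    have hOmega : cubePermOmega ∈ H := Subgroup.subset_closure (by simp)
    have : MulAction.IsPretransitive H (Fin 5) := by
      refine ⟨fun a b => ?_⟩
      have hcycle : ∀ a b : Fin 5, ∃ d : Fin 5, (cubePermIota ^ (d : ℕ)) a = b := by decide
      obtain ⟨d, hd⟩ := hcycle a b
      exact ⟨⟨cubePermIota ^ (d : ℕ), pow_mem hIota _⟩, hd⟩
    have hprim : MulAction.IsPreprimitive H (Fin 5) :=
      MulAction.IsPreprimitive.of_prime_card (by norm_num)
    have hthree : IsThreeCycle cubePermOmega := card_support_eq_three_iff.1 (by decide)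
    exact alternatingGroup_le_of_isPreprimitive_of_isThreeCycle_mem hprim hthree hOmega

theorem closure_r_one_sr_zero_eq_top (n : ℕ) :
    Subgroup.closure {DihedralGroup.r 1, DihedralGroup.sr 0} =
      (⊤ : Subgroup (DihedralGroup n)) := by
  set H := Subgroup.closure {(DihedralGroup.r 1 : DihedralGroup n), DihedralGroup.sr 0}
  have hr : ∀ i : ZMod n, DihedralGroup.r i ∈ H := by
    intro i
    obtain ⟨m, rfl⟩ := ZMod.intCast_surjective i
    rw [← DihedralGroup.r_one_zpow]
    exact zpow_mem (Subgroup.subset_closure (by simp)) m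
  refine (Subgroup.eq_top_iff' H).2 ?_
  rintro (i | i)
  · exact hr i
  · rw [← zero_add i, ← DihedralGroup.sr_mul_r]
    exact mul_mem (Subgroup.subset_closure (by simp)) (hr i)

end Permutations

section Polyhedra

/-- The vertices of a prism over a regular `n`-gon whose axis is spanned by `i`. The dihedral group
permutes them simply transitively, so its own elements serve as labels. -/
noncomputable def prismVertex (n : ℕ) [NeZero n] : DihedralGroup n → W
  | .r m => imQuat 1 (ZMod.stdAddChar m).re (ZMod.stdAddChar m).im
  | .sr m => imQuat (-1) (ZMod.stdAddChar (-m)).re (ZMod.stdAddChar (-m)).im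

/-- One of the two endpoints of each of the four diagonals of a cube, chosen so that the four
points form a regular tetrahedron. A rotation of the cube inducing `σ` on the diagonals maps the
tetrahedron to itself or to its antipode according to the sign of `σ`. -/
def cubeDiagonal : Fin 4 → W :=
  ![imQuat 1 1 1, imQuat 1 (-1) (-1), imQuat (-1) 1 (-1), imQuat (-1) (-1) 1]

/-- The vertices of a regular dodecahedron. The vertices shared by the inscribed cubes `a ≠ b` are
`dodecahedronVertex (a, b)` and its antipode `dodecahedronVertex (b, a)`, and the cube `0` is the
one with vertices `±i ± j ± k`. The diagonal carries the junk value `0`. -/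
noncomputable def dodecahedronVertex (p : Fin 5 × Fin 5) : W :=
  ![![0, imQuat 1 1 1, imQuat 1 (-1) (-1), imQuat (-1) 1 (-1), imQuat (-1) (-1) 1],
    ![imQuat (-1) (-1) (-1), 0, imQuat 0 (1 - tau) tau, imQuat tau 0 (1 - tau),
      imQuat (1 - tau) tau 0],
    ![imQuat (-1) 1 1, imQuat 0 (tau - 1) (-tau), 0, imQuat (1 - tau) (-tau) 0,
      imQuat tau 0 (tau - 1)],
    ![imQuat 1 (-1) 1, imQuat (-tau) 0 (tau - 1), imQuat (tau - 1) tau 0, 0,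
      imQuat 0 (1 - tau) (-tau)],
    ![imQuat 1 1 (-1), imQuat (tau - 1) (-tau) 0, imQuat (-tau) 0 (1 - tau),
      imQuat 0 (tau - 1) tau, 0]] p.1 p.2

theorem prismVertex_injective {n : ℕ} [NeZero n] :
    Function.Injective (prismVertex n) := by
  rintro (m | m) (m' | m') h <;> simp only [prismVertex, imQuat_inj] at h
  · rw [ZMod.injective_stdAddChar (Complex.ext h.2.1 h.2.2)]
  · norm_num at h
  · norm_num at h
  · rw [neg_injective (ZMod.injective_stdAddChar (Complex.ext h.2.1 h.2.2))]

theorem eq_of_cubeDiagonal_eq_smul {u : ℤˣ} {a b : Fin 4}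
    (h : u • cubeDiagonal a = cubeDiagonal b) : a = b := by
  rcases Int.units_eq_one_or u with rfl | rfl <;> fin_cases a <;> fin_cases b <;>
    first | rfl | (norm_num [cubeDiagonal, neg_imQuat, imQuat_inj] at h)

theorem eq_of_dodecahedronVertex_eq {b c d : Fin 5} (hb : b ≠ 0)
    (h : dodecahedronVertex (c, d) = dodecahedronVertex (0, b)) : c = 0 ∧ d = b := by
  have := one_lt_tau
  have := tau_lt_two
  have hzero : (0 : W) = imQuat 0 0 0 := by ext <;> simp
  fin_cases b <;> fin_cases c <;> fin_cases d <;>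
    simp [dodecahedronVertex, imQuat_inj, hzero] at hb h ⊢ <;> grind

theorem imQuat_mem_of_tetrahedron_subset {U : Submodule ℝ W} (h₀ : imQuat 1 1 1 ∈ U)
    (h₁ : imQuat 1 (-1) (-1) ∈ U) (h₂ : imQuat (-1) 1 (-1) ∈ U) :
    imQuat 1 0 0 ∈ U ∧ imQuat 0 1 0 ∈ U := by
  constructor
  · convert U.smul_mem (1 / 2) (U.add_mem h₀ h₁) using 1
    norm_num [add_imQuat, smul_imQuat]
  · convert U.smul_mem (1 / 2) (U.add_mem h₀ h₂) using 1
    norm_num [add_imQuat, smul_imQuat]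

variable {ρ : UnitQuat →* (W ≃ₗᵢ[ℝ] W)}

theorem IsConjugation.unitZeta_mem_signedSymmetryGraph_prismVertex (hρ : IsConjugation ρ)
    (n : ℕ) [NeZero n] :
    (unitZeta n, DihedralGroup.r (1 : ZMod n)) ∈ signedSymmetryGraph ρ 1 (prismVertex n) := by
  rintro (m | m)
  · simp [prismVertex, hρ.apply_unitZeta, AddChar.map_add_eq_mul]
  · simp [prismVertex, hρ.apply_unitZeta, AddChar.map_add_eq_mul, sub_eq_add_neg]

theorem IsConjugation.unitJ_mem_signedSymmetryGraph_prismVertex (hρ : IsConjugation ρ)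
    (n : ℕ) [NeZero n] :
    (unitJ, DihedralGroup.sr (0 : ZMod n)) ∈ signedSymmetryGraph ρ 1 (prismVertex n) := by
  rintro (m | m) <;> simp [prismVertex, hρ.apply_unitJ, AddChar.map_neg_eq_conj]

theorem IsConjugation.unitI_mem_signedSymmetryGraph_cubeDiagonal (hρ : IsConjugation ρ) :
    (unitI, diagPermI) ∈ signedSymmetryGraph ρ Equiv.Perm.sign cubeDiagonal := by
  have hsign : Equiv.Perm.sign diagPermI = 1 := by decide
  intro a
  fin_cases a <;> simp [hsign, coe_diagPermI, cubeDiagonal, hρ.apply_unitI]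

theorem IsConjugation.unitJ_mem_signedSymmetryGraph_cubeDiagonal (hρ : IsConjugation ρ) :
    (unitJ, diagPermJ) ∈ signedSymmetryGraph ρ Equiv.Perm.sign cubeDiagonal := by
  have hsign : Equiv.Perm.sign diagPermJ = 1 := by decide
  intro a
  fin_cases a <;> simp [hsign, coe_diagPermJ, cubeDiagonal, hρ.apply_unitJ]

theorem IsConjugation.unitOmega_mem_signedSymmetryGraph_cubeDiagonal (hρ : IsConjugation ρ) :
    (unitOmega, diagPermOmega) ∈ signedSymmetryGraph ρ Equiv.Perm.sign cubeDiagonal := by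
  have hsign : Equiv.Perm.sign diagPermOmega = 1 := by decide
  intro a
  fin_cases a <;> simp [hsign, coe_diagPermOmega, cubeDiagonal, hρ.apply_unitOmega]

theorem IsConjugation.unitSigma_mem_signedSymmetryGraph_cubeDiagonal (hρ : IsConjugation ρ) :
    (unitSigma, diagPermSigma) ∈ signedSymmetryGraph ρ Equiv.Perm.sign cubeDiagonal := by
  have hsign : Equiv.Perm.sign diagPermSigma = -1 := by decide
  intro a
  fin_cases a <;> simp [hsign, coe_diagPermSigma, cubeDiagonal, hρ.apply_unitSigma, neg_imQuat]

theorem IsConjugation.unitI_mem_signedSymmetryGraph_dodecahedronVertex (hρ : IsConjugation ρ) :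
    (unitI, cubePermI) ∈ signedSymmetryGraph ρ 1 dodecahedronVertex := by
  rintro ⟨a, b⟩
  fin_cases a <;> fin_cases b <;>
    simp [coe_cubePermI, dodecahedronVertex, hρ.apply_unitI]

theorem IsConjugation.unitJ_mem_signedSymmetryGraph_dodecahedronVertex (hρ : IsConjugation ρ) :
    (unitJ, cubePermJ) ∈ signedSymmetryGraph ρ 1 dodecahedronVertex := by
  rintro ⟨a, b⟩
  fin_cases a <;> fin_cases b <;>
    simp [coe_cubePermJ, dodecahedronVertex, hρ.apply_unitJ]

theorem IsConjugation.unitOmega_mem_signedSymmetryGraph_dodecahedronVertex (hρ : IsConjugation ρ) :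
    (unitOmega, cubePermOmega) ∈ signedSymmetryGraph ρ 1 dodecahedronVertex := by
  rintro ⟨a, b⟩
  fin_cases a <;> fin_cases b <;>
    simp [coe_cubePermOmega, dodecahedronVertex, hρ.apply_unitOmega]

theorem IsConjugation.unitIota_mem_signedSymmetryGraph_dodecahedronVertex (hρ : IsConjugation ρ) :
    (unitIota, cubePermIota) ∈ signedSymmetryGraph ρ 1 dodecahedronVertex := by
  rintro ⟨a, b⟩
  fin_cases a <;> fin_cases b <;>
    simp [coe_cubePermIota, dodecahedronVertex, hρ.apply_unitIota, imQuat_inj] <;> grind [tau_sq]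

end Polyhedra

section PolyhedralGroups

theorem imQuat_mem_span_range_prismVertex (n : ℕ) [NeZero n] :
    imQuat 1 0 0 ∈ Submodule.span ℝ (Set.range (prismVertex n)) ∧
      imQuat 0 1 0 ∈ Submodule.span ℝ (Set.range (prismVertex n)) := by
  have hr : imQuat 1 1 0 ∈ Submodule.span ℝ (Set.range (prismVertex n)) :=
    Submodule.subset_span ⟨.r 0, by simp [prismVertex]⟩
  have hsr : imQuat (-1) 1 0 ∈ Submodule.span ℝ (Set.range (prismVertex n)) :=
    Submodule.subset_span ⟨.sr 0, by simp [prismVertex]⟩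
  constructor
  · convert Submodule.smul_mem _ (1 / 2) (sub_mem hr hsr) using 1
    norm_num [sub_eq_add_neg, neg_imQuat, add_imQuat, smul_imQuat]
  · convert Submodule.smul_mem _ (1 / 2) (add_mem hr hsr) using 1
    norm_num [add_imQuat, smul_imQuat]

variable {ρ : UnitQuat →* (W ≃ₗᵢ[ℝ] W)}

theorem IsConjugation.nonempty_map_binDihQ_mulEquiv (hρ : IsConjugation ρ) (n : ℕ) [NeZero n] :
    Nonempty ((BinDihQ n).map ρ ≃* DihedralGroup n) := by
  let S : Set (UnitQuat × DihedralGroup n) := {(unitZeta n, .r 1), (unitJ, .sr 0)}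
  have hS : ∀ p ∈ S, p ∈ signedSymmetryGraph ρ 1 (prismVertex n) := by
    rintro p (rfl | rfl)
    · exact hρ.unitZeta_mem_signedSymmetryGraph_prismVertex n
    · exact hρ.unitJ_mem_signedSymmetryGraph_prismVertex n
  obtain ⟨hi, hj⟩ := imQuat_mem_span_range_prismVertex n
  obtain ⟨e⟩ := hρ.nonempty_map_mulEquiv_of_mem_span (B := BinDihQ n) (H := ⊤)
    (by simp [S, Set.image_insert_eq, binDihQ_eq_closure])
    (by simp [S, Set.image_insert_eq, closure_r_one_sr_zero_eq_top]) hS hi hj fun k hk =>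
      prismVertex_injective (by simpa using hk 1)
  exact ⟨e.trans Subgroup.topEquiv⟩

theorem IsConjugation.nonempty_map_mulEquiv_of_forall_mem_cubeDiagonal (hρ : IsConjugation ρ)
    {S : Set (UnitQuat × Equiv.Perm (Fin 4))} {B : Subgroup UnitQuat}
    {H : Subgroup (Equiv.Perm (Fin 4))} (hB : Subgroup.closure (Prod.fst '' S) = B)
    (hH : Subgroup.closure (Prod.snd '' S) = H)
    (hS : ∀ p ∈ S, p ∈ signedSymmetryGraph ρ Equiv.Perm.sign cubeDiagonal) :
    Nonempty (B.map ρ ≃* H) := by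
  obtain ⟨hi, hj⟩ := imQuat_mem_of_tetrahedron_subset
    (U := Submodule.span ℝ (Set.range cubeDiagonal)) (Submodule.subset_span ⟨0, rfl⟩)
    (Submodule.subset_span ⟨1, rfl⟩) (Submodule.subset_span ⟨2, rfl⟩)
  exact hρ.nonempty_map_mulEquiv_of_mem_span hB hH hS hi hj fun σ hσ =>
    Equiv.ext fun a => eq_of_cubeDiagonal_eq_smul (hσ a)

theorem IsConjugation.nonempty_map_mulEquiv_of_forall_mem_dodecahedronVertex (hρ : IsConjugation ρ)
    {S : Set (UnitQuat × Equiv.Perm (Fin 5))} {B : Subgroup UnitQuat}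
    {H : Subgroup (Equiv.Perm (Fin 5))} (hB : Subgroup.closure (Prod.fst '' S) = B)
    (hH : Subgroup.closure (Prod.snd '' S) = H)
    (hS : ∀ p ∈ S, p ∈ signedSymmetryGraph ρ 1 dodecahedronVertex) :
    Nonempty (B.map ρ ≃* H) := by
  obtain ⟨hi, hj⟩ := imQuat_mem_of_tetrahedron_subset
    (U := Submodule.span ℝ (Set.range dodecahedronVertex)) (Submodule.subset_span ⟨(0, 1), rfl⟩)
    (Submodule.subset_span ⟨(0, 2), rfl⟩) (Submodule.subset_span ⟨(0, 3), rfl⟩)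
  refine hρ.nonempty_map_mulEquiv_of_mem_span hB hH hS hi hj fun σ hσ => Equiv.ext fun b => ?_
  have hfix : ∀ b ≠ 0, σ 0 = 0 ∧ σ b = b := fun b hb =>
    eq_of_dodecahedronVertex_eq hb (by simpa using hσ (0, b))
  rcases eq_or_ne b 0 with rfl | hb
  · exact (hfix 1 one_ne_zero).1
  · exact (hfix b hb).2

theorem IsConjugation.nonempty_map_binTetQ_mulEquiv (hρ : IsConjugation ρ) :
    Nonempty (BinTetQ.map ρ ≃* alternatingGroup (Fin 4)) := by
  let S : Set (UnitQuat × Equiv.Perm (Fin 4)) :=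
    {(unitI, diagPermI), (unitJ, diagPermJ), (unitOmega, diagPermOmega)}
  have hS : ∀ p ∈ S, p ∈ signedSymmetryGraph ρ Equiv.Perm.sign cubeDiagonal := by
    rintro p (rfl | rfl | rfl)
    · exact hρ.unitI_mem_signedSymmetryGraph_cubeDiagonal
    · exact hρ.unitJ_mem_signedSymmetryGraph_cubeDiagonal
    · exact hρ.unitOmega_mem_signedSymmetryGraph_cubeDiagonal
  exact hρ.nonempty_map_mulEquiv_of_forall_mem_cubeDiagonal
    (by simp [S, Set.image_insert_eq, binTetQ_eq_closure])
    (by simp [S, Set.image_insert_eq, closure_diagPerm_eq_alternatingGroup]) hS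

theorem IsConjugation.nonempty_map_binOctQ_mulEquiv (hρ : IsConjugation ρ) :
    Nonempty (BinOctQ.map ρ ≃* Equiv.Perm (Fin 4)) := by
  let S : Set (UnitQuat × Equiv.Perm (Fin 4)) :=
    {(unitSigma, diagPermSigma), (unitI, diagPermI),
      (unitJ, diagPermJ), (unitOmega, diagPermOmega)}
  have hS : ∀ p ∈ S, p ∈ signedSymmetryGraph ρ Equiv.Perm.sign cubeDiagonal := by
    rintro p (rfl | rfl | rfl | rfl)
    · exact hρ.unitSigma_mem_signedSymmetryGraph_cubeDiagonal
    · exact hρ.unitI_mem_signedSymmetryGraph_cubeDiagonal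
    · exact hρ.unitJ_mem_signedSymmetryGraph_cubeDiagonal
    · exact hρ.unitOmega_mem_signedSymmetryGraph_cubeDiagonal
  obtain ⟨e⟩ := hρ.nonempty_map_mulEquiv_of_forall_mem_cubeDiagonal (B := BinOctQ) (H := ⊤)
    (by simp [S, Set.image_insert_eq, binOctQ_eq_closure])
    (by simp [S, Set.image_insert_eq, closure_diagPerm_eq_top]) hS
  exact ⟨e.trans Subgroup.topEquiv⟩

theorem IsConjugation.nonempty_map_binIcoQ_mulEquiv (hρ : IsConjugation ρ) :
    Nonempty (BinIcoQ.map ρ ≃* alternatingGroup (Fin 5)) := by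
  let S : Set (UnitQuat × Equiv.Perm (Fin 5)) :=
    {(unitIota, cubePermIota), (unitI, cubePermI),
      (unitJ, cubePermJ), (unitOmega, cubePermOmega)}
  have hS : ∀ p ∈ S, p ∈ signedSymmetryGraph ρ 1 dodecahedronVertex := by
    rintro p (rfl | rfl | rfl | rfl)
    · exact hρ.unitIota_mem_signedSymmetryGraph_dodecahedronVertex
    · exact hρ.unitI_mem_signedSymmetryGraph_dodecahedronVertex
    · exact hρ.unitJ_mem_signedSymmetryGraph_dodecahedronVertex
    · exact hρ.unitOmega_mem_signedSymmetryGraph_dodecahedronVertex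
  exact hρ.nonempty_map_mulEquiv_of_forall_mem_dodecahedronVertex
    (by simp [S, Set.image_insert_eq, binIcoQ_eq_closure])
    (by simp [S, Set.image_insert_eq, closure_cubePerm_eq_alternatingGroup]) hS

end PolyhedralGroups

/-- Let `ρ` be the 2-to-1 homomorphism from the unit quaternions to the rotation group of
the purely imaginary quaternions `W`, given by `ρ(q) : h ↦ q h q⁻¹`. Then `ρ(D*₄ₙ)` is
isomorphic to the dihedral group of order `2n` (`n ≥ 2`), `ρ(T*) ≅ A₄`, `ρ(O*) ≅ S₄` and
`ρ(I*) ≅ A₅`; moreover the kernel of the restriction of `ρ` to each of these subgroups is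
`{1, -1}`, so each is a central extension by a group of order `2` of the dihedral,
tetrahedral, octahedral and icosahedral group respectively. -/
theorem stmt14 (ρ : UnitQuat →* (W ≃ₗᵢ[ℝ] W))
    (hρ : ∀ (q : UnitQuat) (h : W),
      ((ρ q) h : ℍ[ℝ]) = (q : ℍ[ℝ]) * (h : ℍ[ℝ]) * (q : ℍ[ℝ])⁻¹) :
    (∀ n : ℕ, 2 ≤ n → Nonempty (Subgroup.map ρ (BinDihQ n) ≃* DihedralGroup n)) ∧
    Nonempty (Subgroup.map ρ BinTetQ ≃* alternatingGroup (Fin 4)) ∧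
    Nonempty (Subgroup.map ρ BinOctQ ≃* Equiv.Perm (Fin 4)) ∧
    Nonempty (Subgroup.map ρ BinIcoQ ≃* alternatingGroup (Fin 5)) ∧
    (∀ n : ℕ, 2 ≤ n → ∀ x ∈ BinDihQ n,
      (ρ x = 1 ↔ ((x : ℍ[ℝ]) = 1 ∨ (x : ℍ[ℝ]) = -1))) ∧
    (∀ x ∈ BinTetQ, (ρ x = 1 ↔ ((x : ℍ[ℝ]) = 1 ∨ (x : ℍ[ℝ]) = -1))) ∧
    (∀ x ∈ BinOctQ, (ρ x = 1 ↔ ((x : ℍ[ℝ]) = 1 ∨ (x : ℍ[ℝ]) = -1))) ∧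
    (∀ x ∈ BinIcoQ, (ρ x = 1 ↔ ((x : ℍ[ℝ]) = 1 ∨ (x : ℍ[ℝ]) = -1))) := by
  have hconj : IsConjugation ρ := ⟨hρ⟩
  have hker : ∀ q : UnitQuat, ρ q = 1 ↔ (q : ℍ[ℝ]) = 1 ∨ (q : ℍ[ℝ]) = -1 :=
    fun _ => hconj.map_eq_one_iff
  refine ⟨fun n hn => ?_, hconj.nonempty_map_binTetQ_mulEquiv,
    hconj.nonempty_map_binOctQ_mulEquiv, hconj.nonempty_map_binIcoQ_mulEquiv,
    fun _ _ q _ => hker q, fun q _ => hker q, fun q _ => hker q, fun q _ => hker q⟩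
  have : NeZero n := ⟨by omega⟩
  exact hconj.nonempty_map_binDihQ_mulEquiv n
end
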